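/- arXiv:1903.04351 — 2 statements merged into one kernel-verified Lean document; each statement's English description precedes it below -/
import Mathlib

section
/- There is a universal constant K > 0 such that the following holds. Let k ∈ ℤ₊, ε ∈ (0,1), let X ⊂ ℝ^d be a finite set of n points, and let p ∈ {1,…,n}. Let L be a finite collection of lines in ℝ^d, let X be partitioned as X = ⋃_{l∈L} X_l with X_l ⊆ l, and for each l ∈ L let X_l be partitioned into a finite family 𝒴_l of nonempty 'sub-intervals' (subsets Y ⊆ X_l that are contiguous along l, i.e., Y = I(Y) ∩ X_l where I(Y) is the smallest closed segment of l containing Y). Suppose there are reals s > 0 and t_l > 0 (for l ∈ L) such that each Y ∈ 𝒴_l satisfies either length(I(Y)) ≤ (ε/p)·s or δ(Y) ≤ (ε/k)·t_l, where δ(Y) := ∑_{y∈Y} ‖y − μ(Y)‖ and μ(Y) is the mean of Y. Let D be the multiset consisting of, for each l ∈ L and each Y ∈ 𝒴_l, the point μ(Y) with multiplicity |Y|. Then for every set C ⊂ ℝ^d of k centers: |cost_p(D,C) − cost_p(X,C)| ≤ K·ε·(s + ∑_{l∈L} t_l). -/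
/-- `topP p s` is the sum of the `p` largest entries of the multiset `s` of reals. -/
noncomputable def topP (p : ℕ) (s : Multiset ℝ) : ℝ :=
  (((s.sort (· ≤ ·)).reverse).take p).sum

/-- The p-Centrum objective: the sum of the `p` largest distances from the points
of the multiset `s` (with multiplicity) to the nearest center in `C`. -/
noncomputable def costP (d : ℕ) (p : ℕ) (s : Multiset (EuclideanSpace ℝ (Fin d)))
    (C : Finset (EuclideanSpace ℝ (Fin d))) : ℝ :=
  topP p (s.map fun x => Metric.infDist x (C : Set (EuclideanSpace ℝ (Fin d))))

/-- The mean point of a finite set of points in `ℝ^d`. -/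
noncomputable def meanP (d : ℕ) (Y : Finset (EuclideanSpace ℝ (Fin d))) :
    EuclideanSpace ℝ (Fin d) :=
  ((Y.card : ℝ)⁻¹) • ∑ y ∈ Y, y

/-- The cumulative error of a finite set of points in `ℝ^d`. -/
noncomputable def deltaP (d : ℕ) (Y : Finset (EuclideanSpace ℝ (Fin d))) : ℝ :=
  ∑ y ∈ Y, ‖y - meanP d Y‖

/-!
The sum of the `p` largest entries of a multiset is the minimum over `τ` of `p * τ` plus the total
excess of the entries over `τ`, so it suffices to compare excesses over a threshold. A piece of
length at most `η` moves every distance by at most `η` when it is replaced by its mean; raising the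
threshold by `η` absorbs this at the price `p * η`. Along a line, the Voronoi cells of the `k`
centers cut the truncated distance into at most `k` convex functions with slopes in `[-1, 1]`.
Adding to the slope a jump of `4` at each change of cell gives a monotone potential with values in
an interval of length at most `4 * k`, and replacing a piece by its mean costs at most the increment
of the potential over the piece times the cumulative error of the piece. Over all pieces of a line
the increments sum to at most `4 * k`.
-/

open scoped Finset RealInnerProductSpace

/-! ### Sums of the `p` largest entries -/

/-- The total amount by which the entries of a multiset exceed the threshold `τ`, as an additive
function of the multiset. -/
noncomputable def excess (τ : ℝ) : Multiset ℝ →+ ℝ :=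
  Multiset.sumAddMonoidHom.comp (Multiset.mapAddMonoidHom fun v => (v - τ)⁺)

theorem excess_apply (τ : ℝ) (s : Multiset ℝ) : excess τ s = (s.map fun v => (v - τ)⁺).sum :=
  rfl

theorem excess_nonneg (τ : ℝ) (s : Multiset ℝ) : 0 ≤ excess τ s := by
  refine Multiset.sum_nonneg fun x hx => ?_
  obtain ⟨v, -, rfl⟩ := Multiset.mem_map.1 hx
  exact posPart_nonneg _

theorem sum_eq_card_mul_add_sum_map_sub (s : Multiset ℝ) (τ : ℝ) :
    s.sum = s.card * τ + (s.map (· - τ)).sum := by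
  simp [Multiset.sum_map_sub]

theorem sum_le_card_mul_add_excess (s : Multiset ℝ) (τ : ℝ) :
    s.sum ≤ s.card * τ + excess τ s := by
  rw [sum_eq_card_mul_add_sum_map_sub s τ, excess_apply]
  gcongr
  exact Multiset.sum_map_le_sum_map _ _ fun _ _ => le_posPart _

theorem sum_eq_card_mul_add_excess {s : Multiset ℝ} {τ : ℝ} (h : ∀ v ∈ s, τ ≤ v) :
    s.sum = s.card * τ + excess τ s := by
  rw [sum_eq_card_mul_add_sum_map_sub s τ, excess_apply]
  congr 2
  exact Multiset.map_congr rfl fun v hv => (posPart_eq_self.2 (sub_nonneg.2 (h v hv))).symm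

theorem excess_eq_zero {s : Multiset ℝ} {τ : ℝ} (h : ∀ v ∈ s, v ≤ τ) : excess τ s = 0 := by
  rw [excess_apply]
  refine Multiset.sum_eq_zero fun x hx => ?_
  obtain ⟨v, hv, rfl⟩ := Multiset.mem_map.1 hx
  exact posPart_eq_zero.2 (sub_nonpos.2 (h v hv))

theorem exists_topP_eq_sum {p : ℕ} {s : Multiset ℝ} (hp : p ≤ s.card) :
    ∃ t u : Multiset ℝ, t + u = s ∧ t.card = p ∧ topP p s = t.sum ∧ ∀ a ∈ t, ∀ b ∈ u, b ≤ a := by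
  set l := (s.sort (· ≤ ·)).reverse with hl
  have coe_l : (l : Multiset ℝ) = s := by rw [hl, Multiset.coe_reverse, Multiset.sort_eq]
  have sorted : l.Pairwise (· ≥ ·) := List.pairwise_reverse.2 (Multiset.pairwise_sort s _)
  refine ⟨l.take p, l.drop p, ?_, ?_, ?_, ?_⟩
  · rw [Multiset.coe_add, List.take_append_drop, coe_l]
  · rw [← coe_l, Multiset.coe_card] at hp
    rw [Multiset.coe_card, List.length_take_of_le hp]
  · rw [Multiset.sum_coe, topP]
  · rw [← List.take_append_drop p l] at sorted
    exact (List.pairwise_append.1 sorted).2.2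

theorem topP_le_mul_add_excess {p : ℕ} {s : Multiset ℝ} (hp : p ≤ s.card) (τ : ℝ) :
    topP p s ≤ p * τ + excess τ s := by
  obtain ⟨t, u, rfl, rfl, htop, -⟩ := exists_topP_eq_sum hp
  rw [htop, map_add]
  linarith [sum_le_card_mul_add_excess t τ, excess_nonneg τ u]

theorem exists_topP_eq_mul_add_excess {p : ℕ} {s : Multiset ℝ} (hp1 : 1 ≤ p) (hp : p ≤ s.card) :
    ∃ τ, topP p s = p * τ + excess τ s := by
  obtain ⟨t, u, rfl, rfl, htop, hut⟩ := exists_topP_eq_sum hp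
  have ht : t.toFinset.Nonempty := Multiset.toFinset_nonempty.2 (Multiset.card_pos.1 hp1)
  obtain ⟨τ, hτt, hτ⟩ := t.toFinset.exists_min_image id ht
  simp only [Multiset.mem_toFinset, id_eq] at hτt hτ
  refine ⟨τ, ?_⟩
  rw [htop, map_add, excess_eq_zero (hut τ hτt), add_zero, sum_eq_card_mul_add_excess hτ]

/-- Raising by `η` the threshold that is optimal for `b` costs `p * η`. -/
theorem topP_le_topP_add {p : ℕ} {a b : Multiset ℝ} {η Δ : ℝ} (hp1 : 1 ≤ p) (ha : p ≤ a.card)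
    (hb : p ≤ b.card) (h : ∀ τ, excess (τ + η) a ≤ excess τ b + Δ) :
    topP p a ≤ topP p b + (p * η + Δ) := by
  obtain ⟨τ, hτ⟩ := exists_topP_eq_mul_add_excess hp1 hb
  calc topP p a ≤ p * (τ + η) + excess (τ + η) a := topP_le_mul_add_excess ha _
    _ ≤ p * (τ + η) + (excess τ b + Δ) := by gcongr; exact h τ
    _ = topP p b + (p * η + Δ) := by rw [hτ]; ring

/-! ### Piecewise convex functions on the real line -/

open MeasureTheory in
theorem sum_sub_le_of_monotone {ι α : Type*} [Preorder α] [Nonempty α] (S : Finset ι)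
    {a b : ι → α} {Φ : α → ℝ} (hΦ : Monotone Φ) {A B : ℝ} (hAB : ∀ x, Φ x ∈ Set.Icc A B)
    (hsep : (S : Set ι).Pairwise fun i j => b i ≤ a j ∨ b j ≤ a i) :
    ∑ i ∈ S, (Φ (b i) - Φ (a i)) ≤ B - A := by
  let J i := Set.Ioo (Φ (a i)) (Φ (b i))
  have hJ : (S : Set ι).PairwiseDisjoint J := by
    intro i hi j hj hij
    refine Set.disjoint_left.2 fun x hxi hxj => ?_
    rcases hsep hi hj hij with h | h
    · exact (hxi.2.trans_le (hΦ h)).not_gt hxj.1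
    · exact (hxj.2.trans_le (hΦ h)).not_gt hxi.1
  have hsub : ⋃ i ∈ S, J i ⊆ Set.Icc A B :=
    Set.iUnion₂_subset fun i _ => Set.Ioo_subset_Icc_self.trans
      (Set.Icc_subset_Icc (hAB (a i)).1 (hAB (b i)).2)
  obtain ⟨x⟩ := ‹Nonempty α›
  calc ∑ i ∈ S, (Φ (b i) - Φ (a i)) ≤ ∑ i ∈ S, volume.real (J i) :=
        Finset.sum_le_sum fun i _ => by rw [Real.volume_real_Ioo]; exact le_max_left _ _
    _ = volume.real (⋃ i ∈ S, J i) :=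
        (measureReal_biUnion_finset hJ (fun _ _ => measurableSet_Ioo)
          fun _ _ => measure_Ioo_lt_top.ne).symm
    _ ≤ volume.real (Set.Icc A B) := measureReal_mono hsub measure_Icc_lt_top.ne
    _ = B - A := Real.volume_real_Icc_of_le ((hAB x).1.trans (hAB x).2)

/-- A `1`-Lipschitz function `f` that is convex on each of a sequence of consecutive pieces of the
line: `r x` is the number of the piece that contains `x`, and `σ x` is the slope of a supporting
line at `x` of the restriction of `f` to that piece. -/
structure IsPiecewiseSubgradient (f : ℝ → ℝ) (r : ℝ → ℕ) (σ : ℝ → ℝ) : Prop where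
  monotone_piece : Monotone r
  abs_sub_le : ∀ x y, |f x - f y| ≤ |x - y|
  abs_slope_le : ∀ x, |σ x| ≤ 1
  add_slope_mul_le : ∀ x y, r x = r y → f x + σ x * (y - x) ≤ f y

/-- A potential that measures how far a piecewise convex function is from being affine. The jump
between consecutive pieces is large enough to make the potential monotone although the slope may
drop by `2` there, and to pay for the error of a linear approximation across pieces. -/
def slopePotential (r : ℝ → ℕ) (σ : ℝ → ℝ) (x : ℝ) : ℝ :=
  4 * r x + σ x

namespace IsPiecewiseSubgradient

variable {f : ℝ → ℝ} {r : ℝ → ℕ} {σ : ℝ → ℝ}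

theorem slope_le_slope (h : IsPiecewiseSubgradient f r σ) {x y : ℝ} (hxy : x ≤ y)
    (hr : r x = r y) : σ x ≤ σ y := by
  rcases hxy.eq_or_lt with rfl | hlt
  · rfl
  · have hx := h.add_slope_mul_le x y hr
    have hy := h.add_slope_mul_le y x hr.symm
    exact le_of_mul_le_mul_right (by linarith) (sub_pos.2 hlt)

theorem two_le_slopePotential_sub (h : IsPiecewiseSubgradient f r σ) {x y : ℝ} (hr : r x < r y) :
    2 ≤ slopePotential r σ y - slopePotential r σ x := by
  have hr' : (r x : ℝ) + 1 ≤ r y := by exact_mod_cast hr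
  have hx := abs_le.1 (h.abs_slope_le x)
  have hy := abs_le.1 (h.abs_slope_le y)
  simp only [slopePotential]
  linarith

theorem monotone_slopePotential (h : IsPiecewiseSubgradient f r σ) :
    Monotone (slopePotential r σ) := by
  intro x y hxy
  rcases (h.monotone_piece hxy).lt_or_eq with hr | hr
  · linarith [h.two_le_slopePotential_sub hr]
  · simpa [slopePotential, hr] using h.slope_le_slope hxy hr

theorem slopePotential_mem_Icc (h : IsPiecewiseSubgradient f r σ) {x : ℝ} {k : ℕ}
    (hr : r x < k) : slopePotential r σ x ∈ Set.Icc (-1) (4 * k - 1 : ℝ) := by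
  have hr' : (r x : ℝ) + 1 ≤ k := by exact_mod_cast hr
  have hσ := abs_le.1 (h.abs_slope_le x)
  simp only [slopePotential]
  exact ⟨by linarith [(r x).cast_nonneg (α := ℝ)], by linarith⟩

theorem abs_sub_sub_slope_mul_le (h : IsPiecewiseSubgradient f r σ) (x m : ℝ) :
    |f x - f m - σ m * (x - m)| ≤ |slopePotential r σ x - slopePotential r σ m| * |x - m| := by
  rcases eq_or_ne (r x) (r m) with hr | hr
  · have hnonneg : 0 ≤ f x - f m - σ m * (x - m) := by
      linarith [h.add_slope_mul_le m x hr.symm]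
    have hpot : slopePotential r σ x - slopePotential r σ m = σ x - σ m := by
      simp [slopePotential, hr]
    calc |f x - f m - σ m * (x - m)| = f x - f m - σ m * (x - m) := abs_of_nonneg hnonneg
      _ ≤ (σ x - σ m) * (x - m) := by linarith [h.add_slope_mul_le x m hr]
      _ ≤ |(σ x - σ m) * (x - m)| := le_abs_self _
      _ = _ := by rw [abs_mul, hpot]
  · have hpot : 2 ≤ |slopePotential r σ x - slopePotential r σ m| := by
      rcases hr.lt_or_gt with hr | hr
      · rw [abs_sub_comm]
        exact (h.two_le_slopePotential_sub hr).trans (le_abs_self _)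
      · exact (h.two_le_slopePotential_sub hr).trans (le_abs_self _)
    calc |f x - f m - σ m * (x - m)| ≤ |f x - f m| + |σ m| * |x - m| := by
          rw [← abs_mul]; exact abs_sub _ _
      _ ≤ |x - m| + 1 * |x - m| :=
          add_le_add (h.abs_sub_le x m) (by gcongr; exact h.abs_slope_le m)
      _ = 2 * |x - m| := by ring
      _ ≤ _ := by gcongr

/-- The linear part of `f` at the mean `m` contributes nothing to the sum. -/
theorem abs_sum_sub_le (h : IsPiecewiseSubgradient f r σ) {ι : Type*} (Y : Finset ι) {u : ι → ℝ}
    {m a b : ℝ} (hm : ∑ i ∈ Y, (u i - m) = 0) (hu : ∀ i ∈ Y, u i ∈ Set.Icc a b)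
    (hmab : m ∈ Set.Icc a b) :
    |∑ i ∈ Y, (f (u i) - f m)| ≤
      (slopePotential r σ b - slopePotential r σ a) * ∑ i ∈ Y, |u i - m| := by
  have hpot : ∀ x ∈ Set.Icc a b,
      slopePotential r σ x ∈ Set.Icc (slopePotential r σ a) (slopePotential r σ b) :=
    fun x hx => ⟨h.monotone_slopePotential hx.1, h.monotone_slopePotential hx.2⟩
  calc |∑ i ∈ Y, (f (u i) - f m)| = |∑ i ∈ Y, (f (u i) - f m - σ m * (u i - m))| := by
        rw [Finset.sum_sub_distrib (fun i => f (u i) - f m), ← Finset.mul_sum, hm, mul_zero,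
          sub_zero]
    _ ≤ ∑ i ∈ Y, |f (u i) - f m - σ m * (u i - m)| := Finset.abs_sum_le_sum_abs _ _
    _ ≤ ∑ i ∈ Y, (slopePotential r σ b - slopePotential r σ a) * |u i - m| := by
        refine Finset.sum_le_sum fun i hi => (h.abs_sub_sub_slope_mul_le _ _).trans ?_
        gcongr
        exact Real.dist_le_of_mem_Icc (hpot _ (hu i hi)) (hpot m hmab)
    _ = _ := (Finset.mul_sum _ _ _).symm

end IsPiecewiseSubgradient

/-! ### Truncated distances along a line -/

/-- The amount by which the distance from `x` to the nearest center in `C` exceeds `τ`. -/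
noncomputable def distExcess {E : Type*} [PseudoMetricSpace E] (C : Set E) (τ : ℝ) (x : E) : ℝ :=
  (Metric.infDist x C - τ)⁺

section NormedAddCommGroup

variable {E : Type*} [NormedAddCommGroup E]

theorem abs_infDist_sub_infDist_le (C : Set E) (x y : E) :
    |Metric.infDist x C - Metric.infDist y C| ≤ ‖x - y‖ := by
  simpa [Real.dist_eq, dist_eq_norm] using (Metric.lipschitz_infDist_pt C).dist_le_mul x y

theorem abs_distExcess_sub_distExcess_le (C : Set E) (τ : ℝ) (x y : E) :
    |distExcess C τ x - distExcess C τ y| ≤ ‖x - y‖ :=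
  calc |distExcess C τ x - distExcess C τ y|
      ≤ |Metric.infDist x C - τ - (Metric.infDist y C - τ)| := abs_max_sub_max_le_abs _ _ _
    _ = |Metric.infDist x C - Metric.infDist y C| := by rw [sub_sub_sub_cancel_right]
    _ ≤ ‖x - y‖ := abs_infDist_sub_infDist_le C x y

theorem exists_subgradient_norm_sub_posPart [NormedSpace ℝ E] (c : E) (τ : ℝ) (x : E) :
    ∃ g : StrongDual ℝ E, ‖g‖ ≤ 1 ∧ ∀ y, (‖x - c‖ - τ)⁺ + g (y - x) ≤ (‖y - c‖ - τ)⁺ := by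
  rcases le_total (‖x - c‖) τ with hx | hx
  · refine ⟨0, by simp, fun y => ?_⟩
    rw [posPart_eq_zero.2 (sub_nonpos.2 hx)]
    simp
  · obtain ⟨g, hg, hgx⟩ := exists_dual_vector'' ℝ (x - c)
    refine ⟨g, hg, fun y => ?_⟩
    have hgx : g (x - c) = ‖x - c‖ := by simpa using hgx
    have hgy : g (y - c) ≤ ‖y - c‖ :=
      ((le_abs_self _).trans (g.le_of_opNorm_le hg _)).trans_eq (one_mul _)
    calc (‖x - c‖ - τ)⁺ + g (y - x) = g (y - c) - τ := by
          rw [posPart_eq_self.2 (sub_nonneg.2 hx), ← hgx, ← sub_sub_sub_cancel_right y x c,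
            map_sub g (y - c)]
          ring
      _ ≤ ‖y - c‖ - τ := by gcongr
      _ ≤ (‖y - c‖ - τ)⁺ := le_posPart _

theorem exists_nearest_center {C : Finset E} (hC : C.Nonempty) :
    ∃ c : E → E, ∀ x, c x ∈ C ∧ Metric.infDist x C = ‖x - c x‖ := by
  choose c hcC hc using
    fun x => C.finite_toSet.isCompact.exists_infDist_eq_dist (Finset.coe_nonempty.2 hC) x
  exact ⟨c, fun x => ⟨hcC x, by rw [hc, dist_eq_norm]⟩⟩

end NormedAddCommGroup

section InnerProductSpace

variable {E : Type*} [NormedAddCommGroup E] [InnerProductSpace ℝ E]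

theorem norm_sq_exchange_eq_two_mul_inner (x y c c' : E) :
    (‖x - c'‖ ^ 2 - ‖x - c‖ ^ 2) + (‖y - c‖ ^ 2 - ‖y - c'‖ ^ 2) = 2 * ⟪c' - c, y - x⟫ := by
  simp only [norm_sub_sq_real, inner_sub_left, inner_sub_right, real_inner_comm c,
    real_inner_comm c']
  ring

theorem inner_sub_sub_nonneg_of_nearest {x y c c' : E} (hx : ‖x - c‖ ≤ ‖x - c'‖)
    (hy : ‖y - c'‖ ≤ ‖y - c‖) : 0 ≤ ⟪c' - c, y - x⟫ := by
  have hx2 : ‖x - c‖ ^ 2 ≤ ‖x - c'‖ ^ 2 := by gcongr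
  have hy2 : ‖y - c'‖ ^ 2 ≤ ‖y - c‖ ^ 2 := by gcongr
  linarith [norm_sq_exchange_eq_two_mul_inner x y c c']

theorem norm_sub_eq_of_nearest_of_inner_eq_zero {x y c c' : E} (hx : ‖x - c‖ ≤ ‖x - c'‖)
    (hy : ‖y - c'‖ ≤ ‖y - c‖) (h : ⟪c' - c, y - x⟫ = 0) : ‖y - c‖ = ‖y - c'‖ := by
  have hx2 : ‖x - c‖ ^ 2 ≤ ‖x - c'‖ ^ 2 := by gcongr
  refine hy.antisymm' ((sq_le_sq₀ (norm_nonneg _) (norm_nonneg _)).1 ?_)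
  linarith [norm_sq_exchange_eq_two_mul_inner x y c c']

/-- The pieces are the traces on the line of the Voronoi cells of the centers, numbered by the
positions of the orthogonal projections of their centers to the line; centers with the same
projection share a piece. -/
theorem exists_isPiecewiseSubgradient_distExcess {C : Finset E} (hC : C.Nonempty) (τ : ℝ) (q : E)
    {e : E} (he : ‖e‖ = 1) :
    ∃ r σ, IsPiecewiseSubgradient (fun t => distExcess C τ (q + t • e)) r σ ∧
      ∀ t, r t < #C := by
  classical
  obtain ⟨c, hc⟩ := exists_nearest_center hC
  let γ (t : ℝ) : E := q + t • e
  have hγ : ∀ s t, γ t - γ s = (t - s) • e := fun s t => by simp [γ, sub_smul]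
  have hnear : ∀ x y, ‖x - c x‖ ≤ ‖x - c y‖ := fun x y => by
    rw [← (hc x).2, ← dist_eq_norm]
    exact Metric.infDist_le_dist_of_mem (hc y).1
  let A := C.image (⟪·, e⟫)
  let a (t : ℝ) : A := ⟨⟪c (γ t), e⟫, Finset.mem_image_of_mem _ (hc (γ t)).1⟩
  let r (t : ℝ) : Fin #A := (A.orderIsoOfFin rfl).symm (a t)
  choose g hg hsub using fun x => exists_subgradient_norm_sub_posPart (c x) τ x
  refine ⟨fun t => r t, fun t => g (γ t) e, ⟨?_, ?_, ?_, ?_⟩, ?_⟩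
  · intro s t hst
    refine Fin.val_le_of_le ((A.orderIsoOfFin rfl).symm.monotone (Subtype.mk_le_mk.2 ?_))
    rcases hst.eq_or_lt with rfl | hlt
    · rfl
    · have h := inner_sub_sub_nonneg_of_nearest (hnear (γ s) (γ t)) (hnear (γ t) (γ s))
      rw [hγ, real_inner_smul_right, inner_sub_left] at h
      exact sub_nonneg.1 (nonneg_of_mul_nonneg_right h (sub_pos.2 hlt))
  · intro s t
    refine (abs_distExcess_sub_distExcess_le _ τ _ _).trans_eq ?_
    rw [hγ, norm_smul, he, mul_one, Real.norm_eq_abs]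
  · intro t
    simpa [he] using (g (γ t)).le_of_opNorm_le (hg _) e
  · intro s t hst
    have ha : ⟪c (γ s), e⟫ = ⟪c (γ t), e⟫ :=
      congrArg Subtype.val ((A.orderIsoOfFin rfl).symm.injective (Fin.val_injective hst))
    have hdist : ‖γ t - c (γ s)‖ = ‖γ t - c (γ t)‖ := by
      refine norm_sub_eq_of_nearest_of_inner_eq_zero (hnear (γ s) (γ t)) (hnear (γ t) (γ s)) ?_
      rw [hγ, real_inner_smul_right, inner_sub_left, ha, sub_self, mul_zero]
    have h := hsub (γ s) (γ t)
    rw [hdist, hγ, map_smul, smul_eq_mul, mul_comm, ← (hc _).2, ← (hc _).2] at h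
    exact h
  · exact fun t => (r t).2.trans_le Finset.card_image_le

end InnerProductSpace

/-! ### Means and contiguous subsets -/

section Module

variable {E : Type*} [AddCommGroup E] [Module ℝ E]

/-- The mean of a finite set of points of a real vector space. -/
noncomputable def barycenter (Y : Finset E) : E :=
  (#Y : ℝ)⁻¹ • ∑ y ∈ Y, y

/-- `Y` consists of all points of `P` in the convex hull of `Y`. For subsets of a line this says
that `Y` is a sub-interval of `P`. -/
def IsContiguousIn (Y P : Finset E) : Prop :=
  (Y : Set E) = convexHull ℝ (Y : Set E) ∩ P

theorem barycenter_mem_of_convex {s : Set E} (hs : Convex ℝ s) {Y : Finset E} (hY : Y.Nonempty)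
    (h : ∀ y ∈ Y, y ∈ s) : barycenter Y ∈ s := by
  have hcard : (#Y : ℝ) ≠ 0 := Nat.cast_ne_zero.2 hY.card_ne_zero
  rw [barycenter, Finset.smul_sum]
  refine hs.sum_mem (fun _ _ => by positivity) ?_ h
  rw [Finset.sum_const, nsmul_eq_mul, mul_inv_cancel₀ hcard]

theorem sum_sub_barycenter {Y : Finset E} (hY : Y.Nonempty) :
    ∑ y ∈ Y, (y - barycenter Y) = 0 := by
  have hcard : (#Y : ℝ) ≠ 0 := Nat.cast_ne_zero.2 hY.card_ne_zero
  rw [Finset.sum_sub_distrib, Finset.sum_const, ← Nat.cast_smul_eq_nsmul ℝ, barycenter,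
    smul_inv_smul₀ hcard, sub_self]

theorem IsContiguousIn.subset {Y P : Finset E} (h : IsContiguousIn Y P) : Y ⊆ P :=
  fun y hy => ((Set.ext_iff.1 h y).1 hy).2

theorem IsContiguousIn.mem_of_mem_segment {Y P : Finset E} (h : IsContiguousIn Y P) {x y z : E}
    (hx : x ∈ Y) (hz : z ∈ Y) (hy : y ∈ P) (hxyz : y ∈ segment ℝ x z) : y ∈ Y :=
  (Set.ext_iff.1 h y).2 ⟨segment_subset_convexHull hx hz hxyz, hy⟩

/-- `S` is a partition of the set `P` into nonempty contiguous subsets. -/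
structure IsIntervalPartition (S : Finset (Finset E)) (P : Finset E) : Prop where
  nonempty : ∀ Y ∈ S, Y.Nonempty
  isContiguousIn : ∀ Y ∈ S, IsContiguousIn Y P
  existsUnique_mem : ∀ x ∈ P, ∃! Y, Y ∈ S ∧ x ∈ Y

theorem IsIntervalPartition.pairwiseDisjoint {S : Finset (Finset E)} {P : Finset E}
    (h : IsIntervalPartition S P) : (S : Set (Finset E)).PairwiseDisjoint id := by
  intro Y hY Y' hY' hne
  refine Finset.disjoint_left.2 fun x hx hx' => hne ?_
  exact (h.existsUnique_mem x ((h.isContiguousIn Y hY).subset hx)).unique ⟨hY, hx⟩ ⟨hY', hx'⟩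

theorem add_smul_mem_segment (q e : E) {a b c : ℝ} (hab : a ≤ b) (hbc : b ≤ c) :
    q + b • e ∈ segment ℝ (q + a • e) (q + c • e) := by
  have hline : ∀ t : ℝ, AffineMap.lineMap q (q + e) t = q + t • e := fun t => by
    simp [AffineMap.lineMap_apply, add_comm]
  simp only [← hline, ← image_segment]
  exact Set.mem_image_of_mem _ (segment_eq_Icc (hab.trans hbc) ▸ ⟨hab, hbc⟩)

end Module

/-- The cumulative error of a finite set of points: the sum of the distances to the mean. -/
noncomputable def cumulError {E : Type*} [NormedAddCommGroup E] [NormedSpace ℝ E]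
    (Y : Finset E) : ℝ :=
  ∑ y ∈ Y, ‖y - barycenter Y‖

section InnerProductSpace

variable {E : Type*} [NormedAddCommGroup E] [InnerProductSpace ℝ E]

theorem exists_unit_coordinate {L : AffineSubspace ℝ E} (hL : Module.finrank ℝ L.direction = 1) :
    ∃ q e : E, ‖e‖ = 1 ∧ ∀ x ∈ L, x = q + ⟪e, x⟫ • e := by
  obtain ⟨q, hq⟩ : (L : Set E).Nonempty := by
    refine L.nonempty_iff_ne_bot.2 ?_
    rintro rfl
    rw [AffineSubspace.direction_bot, finrank_bot] at hL
    exact zero_ne_one hL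
  have : Nontrivial L.direction := Module.nontrivial_of_finrank_pos (R := ℝ) (by lia)
  obtain ⟨e, he⟩ := exists_norm_eq L.direction zero_le_one
  have hspan := (finrank_eq_one_iff_of_nonzero' e (norm_ne_zero_iff.1 (by simp [he]))).1 hL
  refine ⟨q - ⟪(e : E), q⟫ • (e : E), e, he, fun x hx => ?_⟩
  obtain ⟨c, hc⟩ := hspan ⟨x - q, L.vsub_mem_direction hx hq⟩
  have hx : x = q + c • (e : E) := eq_add_of_sub_eq' (congrArg Subtype.val hc).symm
  have hc : ⟪(e : E), x⟫ = ⟪(e : E), q⟫ + c := by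
    rw [hx, inner_add_right, real_inner_smul_right, real_inner_self_eq_norm_sq,
      Submodule.norm_coe, he, one_pow, mul_one]
  rw [hc, hx]
  module

variable {q e : E} {L : AffineSubspace ℝ E}

theorem IsContiguousIn.inner_le_inner_or {P Y Y' : Finset E}
    (hP : ∀ x ∈ P, x = q + ⟪e, x⟫ • e) (hY : IsContiguousIn Y P) (hY' : IsContiguousIn Y' P)
    (hdisj : Disjoint Y Y') {a b a' b' : E} (ha : a ∈ Y) (hb : b ∈ Y) (ha' : a' ∈ Y')
    (hb' : b' ∈ Y') : ⟪e, b⟫ ≤ ⟪e, a'⟫ ∨ ⟪e, b'⟫ ≤ ⟪e, a⟫ := by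
  have mem_of_between : ∀ {Z : Finset E}, IsContiguousIn Z P → ∀ {x y z : E}, x ∈ Z → z ∈ Z →
      y ∈ P → ⟪e, x⟫ ≤ ⟪e, y⟫ → ⟪e, y⟫ ≤ ⟪e, z⟫ → y ∈ Z := by
    intro Z hZ x y z hx hz hy hxy hyz
    have hseg := add_smul_mem_segment q e hxy hyz
    rw [← hP x (hZ.subset hx), ← hP y hy, ← hP z (hZ.subset hz)] at hseg
    exact hZ.mem_of_mem_segment hx hz hy hseg
  by_contra! hcross
  rcases le_total ⟪e, a⟫ ⟪e, a'⟫ with h | h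
  · exact Finset.disjoint_left.1 hdisj
      (mem_of_between hY ha hb (hY'.subset ha') h hcross.1.le) ha'
  · exact Finset.disjoint_left.1 hdisj ha
      (mem_of_between hY' ha' hb' (hY.subset ha) h hcross.2.le)

theorem IsPiecewiseSubgradient.abs_sum_sub_barycenter_le {F : E → ℝ} {r : ℝ → ℕ} {σ : ℝ → ℝ}
    (h : IsPiecewiseSubgradient (fun t => F (q + t • e)) r σ) (he : ‖e‖ = 1)
    (hL : ∀ x ∈ L, x = q + ⟪e, x⟫ • e) {Y : Finset E} (hY : Y.Nonempty) (hYL : ∀ y ∈ Y, y ∈ L)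
    {a b : ℝ} (hab : ∀ y ∈ Y, ⟪e, y⟫ ∈ Set.Icc a b) :
    |∑ y ∈ Y, (F y - F (barycenter Y))| ≤
      (slopePotential r σ b - slopePotential r σ a) * cumulError Y := by
  have hμL : barycenter Y ∈ L := barycenter_mem_of_convex L.convex hY hYL
  have hμab : ⟪e, barycenter Y⟫ ∈ Set.Icc a b :=
    barycenter_mem_of_convex ((convex_Icc a b).linear_preimage (innerₛₗ ℝ e)) hY hab
  have hsum : ∑ y ∈ Y, (⟪e, y⟫ - ⟪e, barycenter Y⟫) = 0 := by
    simp only [← inner_sub_right, ← inner_sum, sum_sub_barycenter hY, inner_zero_right]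
  have hF : ∀ x ∈ L, F (q + ⟪e, x⟫ • e) = F x := fun x hx => by rw [← hL x hx]
  have hnorm : ∀ y ∈ Y, |⟪e, y⟫ - ⟪e, barycenter Y⟫| = ‖y - barycenter Y‖ := by
    intro y hy
    nth_rw 2 [hL y (hYL y hy), hL _ hμL]
    rw [add_sub_add_left_eq_sub, ← sub_smul, norm_smul, he, mul_one, Real.norm_eq_abs]
  calc |∑ y ∈ Y, (F y - F (barycenter Y))|
      = |∑ y ∈ Y, (F (q + ⟪e, y⟫ • e) - F (q + ⟪e, barycenter Y⟫ • e))| := by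
        exact congrArg abs (Finset.sum_congr rfl fun y hy => by rw [hF y (hYL y hy), hF _ hμL])
    _ ≤ (slopePotential r σ b - slopePotential r σ a) *
          ∑ y ∈ Y, |⟪e, y⟫ - ⟪e, barycenter Y⟫| := h.abs_sum_sub_le Y hsum hab hμab
    _ = (slopePotential r σ b - slopePotential r σ a) * cumulError Y := by
        rw [Finset.sum_congr rfl hnorm, cumulError]

/-- Along a line, the slope potentials of the pieces add up to at most `4 * #C`. -/
theorem sum_abs_sum_distExcess_sub_barycenter_le {C : Finset E} (hC : C.Nonempty) (τ : ℝ)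
    (hL : Module.finrank ℝ L.direction = 1) {P : Finset E} (hPL : ∀ x ∈ P, x ∈ L)
    {S : Finset (Finset E)} (hne : ∀ Y ∈ S, Y.Nonempty) (hcont : ∀ Y ∈ S, IsContiguousIn Y P)
    (hdisj : (S : Set (Finset E)).PairwiseDisjoint id) {θ : ℝ} (hθ : 0 ≤ θ)
    (hδ : ∀ Y ∈ S, cumulError Y ≤ θ) :
    ∑ Y ∈ S, |∑ y ∈ Y, (distExcess C τ y - distExcess C τ (barycenter Y))| ≤ 4 * #C * θ := by
  obtain ⟨q, e, he, hcoord⟩ := exists_unit_coordinate hL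
  obtain ⟨r, σ, hrσ, hr⟩ := exists_isPiecewiseSubgradient_distExcess hC τ q he
  choose! lo hlo hlo_le using fun Y (hY : Y ∈ S) => Y.exists_min_image (⟪e, ·⟫) (hne Y hY)
  choose! hi hhi hle_hi using fun Y (hY : Y ∈ S) => Y.exists_max_image (⟪e, ·⟫) (hne Y hY)
  let Φ := slopePotential r σ
  have hsep : (S : Set (Finset E)).Pairwise fun Y Y' =>
      ⟪e, hi Y⟫ ≤ ⟪e, lo Y'⟫ ∨ ⟪e, hi Y'⟫ ≤ ⟪e, lo Y⟫ := fun Y hY Y' hY' hYY' =>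
    (hcont Y hY).inner_le_inner_or (fun x hx => hcoord x (hPL x hx)) (hcont Y' hY')
      (hdisj hY hY' hYY') (hlo Y hY) (hhi Y hY) (hlo Y' hY') (hhi Y' hY')
  calc ∑ Y ∈ S, |∑ y ∈ Y, (distExcess C τ y - distExcess C τ (barycenter Y))|
      ≤ ∑ Y ∈ S, (Φ ⟪e, hi Y⟫ - Φ ⟪e, lo Y⟫) * θ := by
        refine Finset.sum_le_sum fun Y hY => ?_
        refine (hrσ.abs_sum_sub_barycenter_le he hcoord (hne Y hY)
          (fun y hy => hPL y ((hcont Y hY).subset hy))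
          fun y hy => ⟨hlo_le Y hY y hy, hle_hi Y hY y hy⟩).trans ?_
        exact mul_le_mul_of_nonneg_left (hδ Y hY)
          (sub_nonneg.2 (hrσ.monotone_slopePotential (hlo_le Y hY _ (hhi Y hY))))
    _ = (∑ Y ∈ S, (Φ ⟪e, hi Y⟫ - Φ ⟪e, lo Y⟫)) * θ := (Finset.sum_mul _ _ _).symm
    _ ≤ (4 * #C - 1 - -1) * θ := by
        gcongr
        exact sum_sub_le_of_monotone S hrσ.monotone_slopePotential
          (fun t => hrσ.slopePotential_mem_Icc (hr t)) hsep
    _ = 4 * #C * θ := by ring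

end InnerProductSpace

/-! ### Replacing sub-intervals by their means -/

theorem val_eq_sum_of_existsUnique {ι α : Type*} {X : Finset α} {s : Finset ι} {f : ι → Finset α}
    (hsub : ∀ i ∈ s, f i ⊆ X) (huniq : ∀ x ∈ X, ∃! i, i ∈ s ∧ x ∈ f i) :
    X.val = ∑ i ∈ s, (f i).val := by
  classical
  have hdisj : (s : Set ι).PairwiseDisjoint f := fun i hi j hj hij =>
    Finset.disjoint_left.2 fun x hxi hxj =>
      hij ((huniq x (hsub i hi hxi)).unique ⟨hi, hxi⟩ ⟨hj, hxj⟩)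
  have hX : X = s.disjiUnion f hdisj := by
    ext x
    rw [Finset.mem_disjiUnion]
    exact ⟨fun hx => (huniq x hx).exists, fun ⟨i, hi, hx⟩ => hsub i hi hx⟩
  rw [hX, Finset.disjiUnion_val]
  rfl

section PseudoMetricSpace

variable {E : Type*} [PseudoMetricSpace E]

/-- The `p`-Centrum objective: the sum of the `p` largest distances from the points of the
multiset `s` to their nearest centers in `C`. -/
noncomputable def centrumCost (p : ℕ) (s : Multiset E) (C : Finset E) : ℝ :=
  topP p (s.map fun x => Metric.infDist x C)

theorem centrumCost_le_centrumCost_add {p : ℕ} {a b : Multiset E} {C : Finset E} {η Δ : ℝ}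
    (hp : 1 ≤ p) (ha : p ≤ a.card) (hb : p ≤ b.card)
    (h : ∀ τ, (a.map (distExcess C (τ + η))).sum ≤ (b.map (distExcess C τ)).sum + Δ) :
    centrumCost p a C ≤ centrumCost p b C + (p * η + Δ) := by
  have excess_map : ∀ (τ : ℝ) (s : Multiset E), excess τ (s.map fun x => Metric.infDist x C) =
      (s.map (distExcess C τ)).sum := fun τ s => by
    rw [excess_apply, Multiset.map_map]
    rfl
  refine topP_le_topP_add hp (by simpa using ha) (by simpa using hb) fun τ => ?_
  rw [excess_map, excess_map]
  exact h τ

end PseudoMetricSpace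

theorem sum_map_sum {ι α M : Type*} [AddCommMonoid M] (T : Finset ι) (s : ι → Multiset α)
    (f : α → M) : ((∑ i ∈ T, s i).map f).sum = ∑ i ∈ T, ((s i).map f).sum :=
  map_sum (Multiset.sumAddMonoidHom.comp (Multiset.mapAddMonoidHom f)) s T

/-- The multiset that represents every set of a family by its mean, with multiplicity the number
of points of the set. -/
noncomputable def meanSummary {E : Type*} [AddCommGroup E] [Module ℝ E]
    (S : Finset (Finset E)) : Multiset E :=
  ∑ Y ∈ S, Multiset.replicate #Y (barycenter Y)

theorem sum_map_meanSummary {E : Type*} [AddCommGroup E] [Module ℝ E] (S : Finset (Finset E))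
    (f : E → ℝ) : ((meanSummary S).map f).sum = ∑ Y ∈ S, ∑ _y ∈ Y, f (barycenter Y) := by
  simp only [meanSummary, sum_map_sum, Multiset.map_replicate, Multiset.sum_replicate,
    Finset.sum_const]

namespace IsIntervalPartition

variable {E : Type*} [AddCommGroup E] [Module ℝ E] {S : Finset (Finset E)} {P : Finset E}

theorem val_eq_sum (h : IsIntervalPartition S P) : P.val = ∑ Y ∈ S, Y.val :=
  val_eq_sum_of_existsUnique (fun Y hY => (h.isContiguousIn Y hY).subset) h.existsUnique_mem

theorem card_meanSummary (h : IsIntervalPartition S P) : (meanSummary S).card = #P := by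
  rw [← Finset.card_val, h.val_eq_sum, meanSummary]
  simp only [Multiset.card_sum, Multiset.card_replicate, Finset.card_val]

theorem sum_map_val (h : IsIntervalPartition S P) (f : E → ℝ) :
    (P.val.map f).sum = ∑ Y ∈ S, ∑ y ∈ Y, f y := by
  rw [h.val_eq_sum, sum_map_sum]
  rfl

end IsIntervalPartition

theorem sum_posPart_sub_add_le {ι : Type*} {Y : Finset ι} {a b : ι → ℝ} {τ η Δ : ℝ}
    (hη : 0 ≤ η) (hΔ : 0 ≤ Δ)
    (h : (∀ i ∈ Y, a i ≤ b i + η) ∨ ∑ i ∈ Y, (a i - τ)⁺ ≤ ∑ i ∈ Y, (b i - τ)⁺ + Δ) :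
    ∑ i ∈ Y, (a i - (τ + η))⁺ ≤ ∑ i ∈ Y, (b i - τ)⁺ + Δ := by
  rcases h with h | h
  · refine (Finset.sum_le_sum fun i hi => ?_).trans (le_add_of_nonneg_right hΔ)
    exact posPart_mono (by linarith [h i hi])
  · refine (Finset.sum_le_sum fun i _ => ?_).trans h
    exact posPart_mono (by linarith)

theorem sum_sum_posPart_sub_add_le {ι κ : Type*} {S : Finset κ} {Y : κ → Finset ι}
    {a b : κ → ι → ℝ} {τ η Δ : ℝ} (hη : 0 ≤ η) {q : κ → Prop} [DecidablePred q]
    (h : ∀ j ∈ S, (∀ i ∈ Y j, |a j i - b j i| ≤ η) ∨ q j)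
    (hq : ∑ j ∈ S with q j, |∑ i ∈ Y j, ((a j i - τ)⁺ - (b j i - τ)⁺)| ≤ Δ) :
    ∑ j ∈ S, ∑ i ∈ Y j, (a j i - (τ + η))⁺ ≤ ∑ j ∈ S, ∑ i ∈ Y j, (b j i - τ)⁺ + Δ := by
  rw [Finset.sum_filter] at hq
  refine le_trans ?_ (add_le_add_right hq _)
  rw [← Finset.sum_add_distrib]
  refine Finset.sum_le_sum fun j hj => sum_posPart_sub_add_le hη (by positivity) ?_
  refine (h j hj).imp (fun hj i hi => ?_) fun hj => ?_
  · linarith [(abs_le.1 (hj i hi)).2]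
  · rw [if_pos hj, ← sub_le_iff_le_add', ← Finset.sum_sub_distrib]
    exact le_abs_self _

theorem norm_sub_barycenter_le_diam {E : Type*} [NormedAddCommGroup E] [NormedSpace ℝ E]
    {Y : Finset E} {y : E} (hy : y ∈ Y) :
    ‖y - barycenter Y‖ ≤ Metric.diam (convexHull ℝ (Y : Set E)) := by
  rw [← dist_eq_norm]
  exact Metric.dist_le_diam_of_mem (isBounded_convexHull.2 Y.finite_toSet.isBounded)
    (subset_convexHull ℝ _ hy)
    (barycenter_mem_of_convex (convex_convexHull ℝ _) ⟨y, hy⟩ fun _ h => subset_convexHull ℝ _ h)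

section InnerProductSpace

variable {E : Type*} [NormedAddCommGroup E] [InnerProductSpace ℝ E]

theorem sum_distExcess_meanSummary_le_and {C : Finset E} (hC : C.Nonempty) (τ : ℝ)
    {L : AffineSubspace ℝ E} (hL : Module.finrank ℝ L.direction = 1) {P : Finset E}
    (hPL : ∀ x ∈ P, x ∈ L) {S : Finset (Finset E)} (hS : IsIntervalPartition S P) {η θ : ℝ}
    (hη : 0 ≤ η) (hθ : 0 ≤ θ)
    (hsmall : ∀ Y ∈ S, Metric.diam (convexHull ℝ (Y : Set E)) ≤ η ∨ cumulError Y ≤ θ) :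
    ((meanSummary S).map (distExcess C (τ + η))).sum ≤
        (P.val.map (distExcess C τ)).sum + 4 * #C * θ ∧
      (P.val.map (distExcess C (τ + η))).sum ≤
        ((meanSummary S).map (distExcess C τ)).sum + 4 * #C * θ := by
  classical
  have hlong : ∑ Y ∈ S with cumulError Y ≤ θ,
      |∑ y ∈ Y, (distExcess C τ y - distExcess C τ (barycenter Y))| ≤ 4 * #C * θ :=
    sum_abs_sum_distExcess_sub_barycenter_le hC τ hL hPL
      (fun Y hY => hS.nonempty Y (Finset.mem_filter.1 hY).1)
      (fun Y hY => hS.isContiguousIn Y (Finset.mem_filter.1 hY).1)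
      (hS.pairwiseDisjoint.subset (Finset.coe_subset.2 (Finset.filter_subset _ _))) hθ
      fun Y hY => (Finset.mem_filter.1 hY).2
  have hclose : ∀ Y ∈ S, (∀ y ∈ Y, |Metric.infDist y C - Metric.infDist (barycenter Y) C| ≤ η) ∨
      cumulError Y ≤ θ := fun Y hY => (hsmall Y hY).imp_left fun h y hy =>
    (abs_infDist_sub_infDist_le _ _ _).trans ((norm_sub_barycenter_le_diam hy).trans h)
  simp only [sum_map_meanSummary, hS.sum_map_val]
  refine ⟨sum_sum_posPart_sub_add_le hη (q := fun Y => cumulError Y ≤ θ) ?_ ?_,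
    sum_sum_posPart_sub_add_le hη hclose hlong⟩
  · simpa only [abs_sub_comm] using hclose
  · convert hlong using 2 with Y
    rw [← abs_neg, ← Finset.sum_neg_distrib]
    simp only [neg_sub, distExcess]

theorem stmt_10_general {ι : Type*} [Fintype ι] {p : ℕ} (hp : 1 ≤ p) {ε : ℝ} (hε : 0 ≤ ε)
    {X : Finset E} (hpX : p ≤ #X) {L : ι → AffineSubspace ℝ E}
    (hL : ∀ l, Module.finrank ℝ (L l).direction = 1) {Xl : ι → Finset E} (hXlX : ∀ l, Xl l ⊆ X)
    (hXlL : ∀ l, ∀ x ∈ Xl l, x ∈ L l) (hX : ∀ x ∈ X, ∃! l, x ∈ Xl l)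
    {Yfam : ι → Finset (Finset E)} (hY : ∀ l, IsIntervalPartition (Yfam l) (Xl l))
    {s : ℝ} (hs : 0 ≤ s) {t : ι → ℝ} (ht : ∀ l, 0 ≤ t l) {C : Finset E} (hC : C.Nonempty)
    (hsmall : ∀ l, ∀ Y ∈ Yfam l, Metric.diam (convexHull ℝ (Y : Set E)) ≤ ε / p * s ∨
      cumulError Y ≤ ε / #C * t l) :
    |centrumCost p (∑ l, meanSummary (Yfam l)) C - centrumCost p X.val C| ≤
      4 * ε * (s + ∑ l, t l) := by
  have hXval : X.val = ∑ l, (Xl l).val :=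
    val_eq_sum_of_existsUnique (fun l _ => hXlX l) (by simpa using hX)
  have hcard : p ≤ (∑ l, meanSummary (Yfam l)).card := by
    refine hpX.trans_eq ?_
    rw [← Finset.card_val X, hXval]
    simp only [Multiset.card_sum, (hY _).card_meanSummary, Finset.card_val]
  have hline := fun τ l => sum_distExcess_meanSummary_le_and hC τ (hL l) (hXlL l) (hY l)
    (by positivity : 0 ≤ ε / p * s) (by have := ht l; positivity) (hsmall l)
  have hDX := centrumCost_le_centrumCost_add hp hcard hpX fun τ => by
    rw [hXval, sum_map_sum, sum_map_sum, ← Finset.sum_add_distrib]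
    exact Finset.sum_le_sum fun l _ => (hline τ l).1
  have hXD := centrumCost_le_centrumCost_add hp hpX hcard fun τ => by
    rw [hXval, sum_map_sum, sum_map_sum, ← Finset.sum_add_distrib]
    exact Finset.sum_le_sum fun l _ => (hline τ l).2
  have hη : p * (ε / p * s) = ε * s := by
    have : (p : ℝ) ≠ 0 := by positivity
    field_simp
  have hθ : ∑ l, 4 * #C * (ε / #C * t l) = 4 * ε * ∑ l, t l := by
    have : (#C : ℝ) ≠ 0 := Nat.cast_ne_zero.2 hC.card_ne_zero
    rw [Finset.mul_sum]
    exact Finset.sum_congr rfl fun l _ => by field_simp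
  have hεs : 0 ≤ ε * s := by positivity
  rw [abs_sub_le_iff]
  constructor <;> linarith

end InnerProductSpace

theorem stmt_10 :
    ∃ K : ℝ, 0 < K ∧
      ∀ (d k n m p : ℕ), 1 ≤ k → 1 ≤ p → p ≤ n →
      ∀ ε : ℝ, ε ∈ Set.Ioo (0 : ℝ) 1 →
      ∀ X : Finset (EuclideanSpace ℝ (Fin d)), X.card = n →
      -- a collection of lines
      ∀ L : Fin m → AffineSubspace ℝ (EuclideanSpace ℝ (Fin d)),
        (∀ l, Module.finrank ℝ (L l).direction = 1) →
      -- `X` is partitioned into `Xl l ⊆ L l`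
      ∀ Xl : Fin m → Finset (EuclideanSpace ℝ (Fin d)),
        (∀ l, Xl l ⊆ X) →
        (∀ l, ∀ x ∈ Xl l, x ∈ L l) →
        (∀ x ∈ X, ∃! l, x ∈ Xl l) →
      -- each `Xl l` is partitioned into a family `Yfam l` of nonempty sub-intervals
      ∀ Yfam : Fin m → Finset (Finset (EuclideanSpace ℝ (Fin d))),
        (∀ l, ∀ Y ∈ Yfam l, Y.Nonempty) →
        -- contiguity: `Y = I(Y) ∩ Xl l`
        (∀ l, ∀ Y ∈ Yfam l, (Y : Set (EuclideanSpace ℝ (Fin d))) =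
          convexHull ℝ (Y : Set (EuclideanSpace ℝ (Fin d))) ∩
            (Xl l : Set (EuclideanSpace ℝ (Fin d)))) →
        (∀ l, ∀ x ∈ Xl l, ∃! Y, Y ∈ Yfam l ∧ x ∈ Y) →
      ∀ (s : ℝ) (t : Fin m → ℝ), 0 < s → (∀ l, 0 < t l) →
        -- each sub-interval is either short or has small cumulative error
        (∀ l, ∀ Y ∈ Yfam l,
          Metric.diam (convexHull ℝ (Y : Set (EuclideanSpace ℝ (Fin d)))) ≤ (ε / p) * s ∨
            deltaP d Y ≤ (ε / k) * t l) →
      -- conclusion: the multiset of means (with multiplicities) is a good summary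
      ∀ C : Finset (EuclideanSpace ℝ (Fin d)), C.card = k → C.Nonempty →
        |costP d p (∑ l : Fin m, ∑ Y ∈ Yfam l, Multiset.replicate Y.card (meanP d Y)) C -
          costP d p X.val C| ≤ K * ε * (s + ∑ l : Fin m, t l) := by
  refine ⟨4, by norm_num, ?_⟩
  rintro d _ n m p - hp hpn ε hε X rfl L hL Xl hXlX hXlL hX Yfam hne hcont hY s t hs ht hsmall
    C rfl hC
  exact stmt_10_general hp hε.1.le hpn hL hXlX hXlL hX (fun l => ⟨hne l, hcont l, hY l⟩) hs.le
    (fun l => (ht l).le) hC hsmall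
end

section
/- For every d ∈ ℤ₊ there is a constant K_d > 0 such that the following holds. Given k ∈ ℤ₊, ε ∈ (0,1), a finite set X ⊂ ℝ^d of n points, and p ∈ {1,…,n}, there exists a finite multiset D of points in ℝ^d (points with positive integer multiplicities) whose number of distinct points is at most K_d·k²/ε^{d+1}, such that for every set C ⊂ ℝ^d of k centers: cost_p(D,C) ∈ [(1−ε)·cost_p(X,C), (1+ε)·cost_p(X,C)]. -/
attribute [local instance] Classical.decEq

/-! The sum of the `p` largest values of `a` is the minimum over `t` of
`p * t + ∑ x, max (a x - t) 0`, so it suffices to control the truncated distances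
`max (infDist x C - t) 0`, uniformly in `t`.

Take `k` centers whose cost `R` is at most twice the optimum, and move every point to one of the
`O(k / ε ^ d)` rays that leave these centers in the directions of an `ε`-net. The `p` costliest
points keep their distance `r` to the centers; the other points have `r ≤ R / p` and are placed at
distance exactly `R / p`. This costs `O(ε * R)`.

On each ray, cut the costliest points, sorted by `r`, into buckets in which the values of `r` other
than the smallest sum to at most `T`, and replace `r` by its mean on each bucket. Along a ray the
truncated distance is `1`-Lipschitz, and convex on each of `k` intervals because Voronoi cells are
convex. Replacing `r` by its mean loses at most the increase of the slope across the bucket times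
`2 * T`, and the slope increases over one interval add up to a constant. A ray thus loses
`O(k * T)`, and with `T` of order `ε * R / (k * #rays)` only `O(k * #rays / ε)` buckets remain. -/

open Finset Metric Module
open scoped BigOperators NNReal

section TopP

variable {ι : Type*} {X S : Finset ι} {a b : ι → ℝ} {p : ℕ} {c e : ℝ}

lemma exists_topP_eq_sum_s12 (a : ι → ℝ) (hpX : p ≤ #X) :
    ∃ S ⊆ X, #S = p ∧ (∀ x ∈ S, ∀ y ∈ X \ S, a y ≤ a x) ∧
      topP p (X.val.map a) = ∑ x ∈ S, a x := by
  let r : ι → ι → Prop := fun x y => a y ≤ a x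
  have : Std.Total r := ⟨fun x y => le_total _ _⟩
  have : IsTrans ι r := ⟨fun x y z hxy hyz => le_trans hyz hxy⟩
  let l := X.toList.insertionSort r
  have hperm : l.Perm X.toList := List.perm_insertionSort r _
  have hsorted : l.Pairwise r := List.pairwise_insertionSort r _
  have hnodup : l.Nodup := hperm.nodup_iff.2 X.nodup_toList
  have hmem (x : ι) : x ∈ l ↔ x ∈ X := by rw [hperm.mem_iff, mem_toList]
  have hsort : ((X.val.map a).sort (· ≤ ·)).reverse = l.map a := by
    refine List.Perm.eq_of_pairwise (le := fun x y : ℝ => y ≤ x)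
      (fun x y _ _ hyx hxy => le_antisymm hxy hyx)
      (List.pairwise_reverse.2 (Multiset.pairwise_sort _ _)) (List.pairwise_map.2 hsorted) ?_
    rw [← Multiset.coe_eq_coe, Multiset.coe_reverse, Multiset.sort_eq, ← Multiset.map_coe,
      Multiset.coe_eq_coe.2 hperm, coe_toList]
  have htake_nodup : (l.take p).Nodup := hnodup.sublist (List.take_sublist _ _)
  refine ⟨(l.take p).toFinset, fun x hx => ?_, ?_, fun x hx y hy => ?_, ?_⟩
  · exact (hmem x).1 (List.mem_of_mem_take (List.mem_toFinset.1 hx))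
  · rw [List.toFinset_card_of_nodup htake_nodup, List.length_take, hperm.length_eq, length_toList,
      min_eq_left hpX]
  · rw [← List.take_append_drop p l, List.pairwise_append] at hsorted
    obtain ⟨hyX, hy⟩ := mem_sdiff.1 hy
    rw [← hmem, ← List.take_append_drop p l, List.mem_append] at hyX
    exact hsorted.2.2 x (List.mem_toFinset.1 hx) y
      (hyX.resolve_left fun h => hy (List.mem_toFinset.2 h))
  · rw [topP, hsort, ← List.map_take, List.sum_toFinset _ htake_nodup]

lemma sum_le_card_mul_add_sum_max (hSX : S ⊆ X) (a : ι → ℝ) (t : ℝ) :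
    ∑ x ∈ S, a x ≤ #S * t + ∑ x ∈ X, max (a x - t) 0 :=
  calc ∑ x ∈ S, a x = #S * t + ∑ x ∈ S, (a x - t) := by
        rw [sum_sub_distrib, sum_const, nsmul_eq_mul, add_sub_cancel]
    _ ≤ #S * t + ∑ x ∈ S, max (a x - t) 0 := by gcongr; exact le_max_left _ _
    _ ≤ #S * t + ∑ x ∈ X, max (a x - t) 0 := by gcongr

lemma isLeast_topP (a : ι → ℝ) (hp : 0 < p) (hpX : p ≤ #X) :
    IsLeast (Set.range fun t : ℝ => p * t + ∑ x ∈ X, max (a x - t) 0) (topP p (X.val.map a)) := by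
  obtain ⟨S, hSX, hSp, hdom, htop⟩ := exists_topP_eq_sum_s12 a hpX
  rw [htop]
  constructor
  · obtain ⟨z, hzS, hz⟩ := S.exists_min_image a (card_pos.1 (hSp ▸ hp))
    refine ⟨a z, ?_⟩
    have hin : ∑ x ∈ S, max (a x - a z) 0 = ∑ x ∈ S, (a x - a z) :=
      sum_congr rfl fun x hx => max_eq_left (sub_nonneg.2 (hz x hx))
    have hout : ∑ x ∈ X, max (a x - a z) 0 = ∑ x ∈ S, max (a x - a z) 0 :=
      (sum_subset hSX fun x hx hxS =>
        max_eq_right (sub_nonpos.2 (hdom z hzS x (mem_sdiff.2 ⟨hx, hxS⟩)))).symm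
    simp only [hout, hin, sum_sub_distrib, sum_const, hSp, nsmul_eq_mul, add_sub_cancel]
  · rintro _ ⟨t, rfl⟩
    exact hSp ▸ sum_le_card_mul_add_sum_max hSX a t

lemma sum_le_topP (hp : 0 < p) (hSX : S ⊆ X) (hSp : #S = p) (a : ι → ℝ) :
    ∑ x ∈ S, a x ≤ topP p (X.val.map a) := by
  obtain ⟨t, ht⟩ := (isLeast_topP a hp (hSp ▸ card_le_card hSX)).1
  rw [← ht, ← hSp]
  exact sum_le_card_mul_add_sum_max hSX a t

lemma topP_le_mul_topP (hp : 0 < p) (hpX : p ≤ #X) (hc : 0 ≤ c) (h : ∀ x ∈ X, a x ≤ c * b x) :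
    topP p (X.val.map a) ≤ c * topP p (X.val.map b) := by
  obtain ⟨S, hSX, hSp, -, htop⟩ := exists_topP_eq_sum_s12 a hpX
  calc topP p (X.val.map a) = ∑ x ∈ S, a x := htop
    _ ≤ c * ∑ x ∈ S, b x := by
        rw [mul_sum]
        exact sum_le_sum fun x hx => h x (hSX hx)
    _ ≤ c * topP p (X.val.map b) := by gcongr; exact sum_le_topP hp hSX hSp b

lemma topP_le_topP_add_of_sum_abs_sub_le (hp : 0 < p) (hpX : p ≤ #X)
    (h : ∀ S ⊆ X, #S = p → ∑ x ∈ S, |a x - b x| ≤ e) :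
    topP p (X.val.map a) ≤ topP p (X.val.map b) + e := by
  obtain ⟨S, hSX, hSp, -, htop⟩ := exists_topP_eq_sum_s12 a hpX
  calc topP p (X.val.map a) = ∑ x ∈ S, b x + ∑ x ∈ S, (a x - b x) := by
        rw [htop, sum_sub_distrib, add_sub_cancel]
    _ ≤ ∑ x ∈ S, b x + ∑ x ∈ S, |a x - b x| := by gcongr; exact le_abs_self _
    _ ≤ topP p (X.val.map b) + e := add_le_add (sum_le_topP hp hSX hSp b) (h S hSX hSp)

lemma abs_topP_sub_topP_le_of_sum_abs_sub_le (hp : 0 < p) (hpX : p ≤ #X)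
    (h : ∀ S ⊆ X, #S = p → ∑ x ∈ S, |a x - b x| ≤ e) :
    |topP p (X.val.map a) - topP p (X.val.map b)| ≤ e :=
  abs_sub_le_iff.2
    ⟨sub_le_iff_le_add'.2 (topP_le_topP_add_of_sum_abs_sub_le hp hpX h),
      sub_le_iff_le_add'.2 (topP_le_topP_add_of_sum_abs_sub_le hp hpX
        (by simpa only [abs_sub_comm] using h))⟩

lemma topP_le_topP_add_of_sum_max_le (hp : 0 < p) (hpX : p ≤ #X)
    (h : ∀ t : ℝ, ∑ x ∈ X, max (a x - t) 0 ≤ ∑ x ∈ X, max (b x - t) 0 + e) :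
    topP p (X.val.map a) ≤ topP p (X.val.map b) + e := by
  obtain ⟨t, ht⟩ := (isLeast_topP b hp hpX).1
  calc topP p (X.val.map a) ≤ p * t + ∑ x ∈ X, max (a x - t) 0 :=
        (isLeast_topP a hp hpX).2 ⟨t, rfl⟩
    _ ≤ p * t + (∑ x ∈ X, max (b x - t) 0 + e) := by gcongr; exact h t
    _ = topP p (X.val.map b) + e := by rw [← ht, add_assoc]

lemma abs_topP_sub_topP_le_of_abs_sum_max_sub_le (hp : 0 < p) (hpX : p ≤ #X)
    (h : ∀ t : ℝ, |∑ x ∈ X, (max (a x - t) 0 - max (b x - t) 0)| ≤ e) :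
    |topP p (X.val.map a) - topP p (X.val.map b)| ≤ e := by
  simp only [sum_sub_distrib, abs_sub_le_iff, sub_le_iff_le_add'] at h ⊢
  exact ⟨topP_le_topP_add_of_sum_max_le hp hpX fun t => (h t).1,
    topP_le_topP_add_of_sum_max_le hp hpX fun t => (h t).2⟩

end TopP

/-- `h` is piecewise convex with `n` pieces: the line is covered by at most `n` sets (necessarily
intervals) on each of which `h` is convex. The pieces may overlap. -/
def IsPiecewiseConvex (n : ℕ) (h : ℝ → ℝ) : Prop :=
  ∃ 𝓘 : Finset (Set ℝ), #𝓘 ≤ n ∧ ⋃₀ (𝓘 : Set (Set ℝ)) = Set.univ ∧ ∀ J ∈ 𝓘, ConvexOn ℝ J h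

section Slope

variable {κ : Type*} [LinearOrder κ] {Q : Finset κ} {J : Set ℝ} {h : ℝ → ℝ} {L : ℝ≥0} {n : ℕ}

lemma abs_slope_le_of_lipschitzWith (hL : LipschitzWith L h) (x y : ℝ) : |slope h x y| ≤ L := by
  rw [slope_def_field, abs_div]
  exact div_le_of_le_mul₀ (abs_nonneg _) L.2 (hL.dist_le_mul y x)

lemma slope_le_slope_of_convexOn {w x y z : ℝ} (hconv : ConvexOn ℝ J h) (hw : w ∈ J) (hx : x ∈ J)
    (hy : y ∈ J) (hz : z ∈ J) (hwx : w < x) (hxy : x ≤ y) (hyz : y < z) :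
    slope h w x ≤ slope h y z :=
  have hxz := hxy.trans_lt hyz
  calc slope h w x = slope h x w := slope_comm h w x
    _ ≤ slope h x z := hconv.slope_mono hx ⟨hw, hwx.ne⟩ ⟨hz, hxz.ne'⟩ (hwx.trans hxz).le
    _ = slope h z x := slope_comm h x z
    _ ≤ slope h z y := hconv.slope_mono hz ⟨hx, hxz.ne⟩ ⟨hy, hyz.ne⟩ hxy
    _ = slope h y z := slope_comm h z y

lemma abs_sub_slope_mul_le_of_convexOn {a m b y : ℝ} (hconv : ConvexOn ℝ (Set.Icc a b) h)
    (ham : a < m) (hmb : m < b) (hy : y ∈ Set.Icc a b) :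
    |h y - h m - slope h a m * (y - m)| ≤ (slope h m b - slope h a m) * |y - m| := by
  rcases eq_or_ne y m with rfl | hym
  · simp
  have hmono := hconv.slope_mono ⟨ham.le, hmb.le⟩
  have hab := (ham.trans hmb).le
  have hlower : slope h a m ≤ slope h m y := by
    rw [slope_comm h a m]
    exact hmono ⟨Set.left_mem_Icc.2 hab, ham.ne⟩ ⟨hy, hym⟩ hy.1
  have hupper : slope h m y ≤ slope h m b :=
    hmono ⟨hy, hym⟩ ⟨Set.right_mem_Icc.2 hab, hmb.ne'⟩ hy.2
  have hslope : (y - m) * slope h m y = h y - h m := sub_smul_slope h m y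
  calc |h y - h m - slope h a m * (y - m)| = |(slope h m y - slope h a m) * (y - m)| := by
        rw [← hslope, mul_comm (y - m), ← sub_mul]
    _ = (slope h m y - slope h a m) * |y - m| := by
        rw [abs_mul, abs_of_nonneg (sub_nonneg.2 hlower)]
    _ ≤ (slope h m b - slope h a m) * |y - m| := by gcongr

lemma sum_sub_le_of_separated {l u : κ → ℝ} {A B : ℝ} (hAB : A ≤ B) (hl : ∀ q ∈ Q, A ≤ l q)
    (hu : ∀ q ∈ Q, u q ≤ B) (hlu : ∀ q ∈ Q, ∀ q' ∈ Q, q < q' → u q ≤ l q') :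
    ∑ q ∈ Q, (u q - l q) ≤ B - A := by
  induction Q using Finset.induction_on_max generalizing B with
  | empty => simpa using hAB
  | insert q Q hmax ih =>
    simp only [forall_mem_insert] at hl hu hlu
    have hrest : ∑ q ∈ Q, (u q - l q) ≤ l q - A :=
      ih hl.1 hl.2 (fun q' hq' => (hlu.2 q' hq').1 (hmax q' hq')) fun q' hq' => (hlu.2 q' hq').2
    rw [sum_insert fun hq => (hmax q hq).false]
    linarith [hu.1]

variable {a m b : κ → ℝ}

-- Convexity makes the slopes increase from `-L` to `L` along the buckets inside `J`, and only the
-- last bucket can stick out of `J`.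
open Classical in
lemma sum_slope_sub_slope_le (hL : LipschitzWith L h) (hconv : ConvexOn ℝ J h)
    (ham : ∀ q ∈ Q, a q < m q) (hmb : ∀ q ∈ Q, m q < b q)
    (hba : ∀ q ∈ Q, ∀ q' ∈ Q, q < q' → b q ≤ a q') (haJ : ∀ q ∈ Q, a q ∈ J) :
    ∑ q ∈ Q, (if b q ∈ J then slope h (m q) (b q) - slope h (a q) (m q) else L) ≤ 3 * L := by
  have hJ := hconv.1.ordConnected
  have hslope (x y : ℝ) := abs_le.1 (abs_slope_le_of_lipschitzWith hL x y)
  have hmJ : ∀ q ∈ Q, b q ∈ J → m q ∈ J := fun q hq hbJ =>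
    hJ.out (haJ q hq) hbJ ⟨(ham q hq).le, (hmb q hq).le⟩
  have hinside : ∑ q ∈ Q with b q ∈ J, (slope h (m q) (b q) - slope h (a q) (m q)) ≤ L - -L := by
    refine sum_sub_le_of_separated (neg_le_self L.2) (fun q _ => (hslope _ _).1)
      (fun q _ => (hslope _ _).2) fun q hq q' hq' hqq' => ?_
    obtain ⟨hq, hbJ⟩ := mem_filter.1 hq
    obtain ⟨hq', hbJ'⟩ := mem_filter.1 hq'
    exact slope_le_slope_of_convexOn hconv (hmJ q hq hbJ) hbJ (haJ q' hq') (hmJ q' hq' hbJ')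
      (hmb q hq) (hba q hq q' hq' hqq') (ham q' hq')
  have hoverhang : #{q ∈ Q | b q ∉ J} ≤ 1 := by
    have hlast : ∀ q ∈ Q, b q ∉ J → ∀ q' ∈ Q, q' ≤ q := fun q hq hbJ q' hq' =>
      not_lt.1 fun hqq' => hbJ (hJ.out (haJ q hq) (haJ q' hq')
        ⟨((ham q hq).trans (hmb q hq)).le, hba q hq q' hq' hqq'⟩)
    simp only [card_le_one, mem_filter]
    exact fun q hq q' hq' =>
      le_antisymm (hlast q' hq'.1 hq'.2 q hq.1) (hlast q hq.1 hq.2 q' hq'.1)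
  have houtside : ∑ q ∈ Q with b q ∉ J, (L : ℝ) ≤ L := by
    rw [sum_const, nsmul_eq_mul]
    exact mul_le_of_le_one_left L.2 (mod_cast hoverhang)
  rw [sum_ite]
  linarith

lemma exists_affine_approx_of_isPiecewiseConvex (hL : LipschitzWith L h)
    (hn : IsPiecewiseConvex n h) (ham : ∀ q ∈ Q, a q < m q) (hmb : ∀ q ∈ Q, m q < b q)
    (hba : ∀ q ∈ Q, ∀ q' ∈ Q, q < q' → b q ≤ a q') :
    ∃ s v : κ → ℝ, (∀ q ∈ Q, 0 ≤ v q) ∧ ∑ q ∈ Q, v q ≤ n * (3 * L) ∧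
      ∀ q ∈ Q, ∀ y ∈ Set.Icc (a q) (b q), |h y - h (m q) - s q * (y - m q)| ≤ v q * |y - m q| := by
  classical
  obtain ⟨𝓘, hcard, hcover, hconv⟩ := hn
  have hpiece (q : κ) : ∃ J ∈ 𝓘, a q ∈ J := Set.mem_sUnion.1 (hcover ▸ Set.mem_univ (a q))
  choose J hJ𝓘 haJ using hpiece
  let s (q : κ) : ℝ := if b q ∈ J q then slope h (a q) (m q) else 0
  let v (q : κ) : ℝ := if b q ∈ J q then slope h (m q) (b q) - slope h (a q) (m q) else L
  have happrox : ∀ q ∈ Q, ∀ y ∈ Set.Icc (a q) (b q),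
      |h y - h (m q) - s q * (y - m q)| ≤ v q * |y - m q| := by
    intro q hq y hy
    by_cases hbJ : b q ∈ J q
    · have hconvq := hconv (J q) (hJ𝓘 q)
      simp only [s, v, if_pos hbJ]
      exact abs_sub_slope_mul_le_of_convexOn
        (hconvq.subset (hconvq.1.ordConnected.out (haJ q) hbJ) (convex_Icc _ _))
        (ham q hq) (hmb q hq) hy
    · simp only [s, v, if_neg hbJ, zero_mul, sub_zero]
      exact hL.dist_le_mul y (m q)
  refine ⟨s, v, fun q hq => ?_, ?_, happrox⟩
  · have hb := happrox q hq (b q) (Set.right_mem_Icc.2 ((ham q hq).trans (hmb q hq)).le)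
    exact nonneg_of_mul_nonneg_left ((abs_nonneg _).trans hb)
      (abs_pos.2 (sub_ne_zero.2 (hmb q hq).ne'))
  · have hfiber : ∀ I ∈ 𝓘, ∑ q ∈ Q with J q = I, v q ≤ 3 * L := fun I hI => by
      rw [sum_congr rfl fun q hq => show v q = _ by simp only [v, (mem_filter.1 hq).2]; rfl]
      exact sum_slope_sub_slope_le hL (hconv I hI) (fun q hq => ham q (mem_filter.1 hq).1)
        (fun q hq => hmb q (mem_filter.1 hq).1)
        (fun q hq q' hq' => hba q (mem_filter.1 hq).1 q' (mem_filter.1 hq').1)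
        fun q hq => (mem_filter.1 hq).2 ▸ haJ q
    calc ∑ q ∈ Q, v q = ∑ I ∈ 𝓘, ∑ q ∈ Q with J q = I, v q :=
          (sum_fiberwise_of_maps_to (fun q _ => hJ𝓘 q) v).symm
      _ ≤ #𝓘 * (3 * L) := by
          rw [← nsmul_eq_mul]
          exact sum_le_card_nsmul _ _ _ hfiber
      _ ≤ n * (3 * L) := by gcongr

end Slope

section Quantize

variable {ι : Type*} {I : Finset ι} {r : ι → ℝ} {h : ℝ → ℝ} {L : ℝ≥0} {n : ℕ} {T : ℝ}

lemma sum_sub_expect (B : Finset ι) (r : ι → ℝ) : ∑ x ∈ B, (r x - 𝔼 y ∈ B, r y) = 0 := by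
  rw [sum_sub_distrib, sum_const, card_smul_expect, sub_self]

lemma sum_abs_sub_expect_le {B : Finset ι} {a : ℝ} (ha : ∀ x ∈ B, a ≤ r x) :
    ∑ x ∈ B, |r x - 𝔼 y ∈ B, r y| ≤ 2 * ∑ x ∈ B, (r x - a) := by
  rcases B.eq_empty_or_nonempty with rfl | hB
  · simp
  have hmean : a ≤ 𝔼 y ∈ B, r y := le_expect hB ha
  calc ∑ x ∈ B, |r x - 𝔼 y ∈ B, r y| ≤ ∑ x ∈ B, ((r x - a) + (𝔼 y ∈ B, r y - a)) :=
        sum_le_sum fun x hx => by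
          rw [abs_le]
          constructor <;> linarith [ha x hx]
    _ = 2 * ∑ x ∈ B, (r x - a) - ∑ x ∈ B, (r x - 𝔼 y ∈ B, r y) := by
        rw [mul_sum, ← sum_sub_distrib]
        exact sum_congr rfl fun x _ => by ring
    _ = 2 * ∑ x ∈ B, (r x - a) := by rw [sum_sub_expect, sub_zero]

lemma sum_abs_sub_expect_le_of_sum_lt_le {B : Finset ι} (hT : 0 ≤ T) (hr : ∀ x ∈ B, 0 ≤ r x)
    (htail : ∀ x ∈ B, ∑ y ∈ B with r x < r y, r y ≤ T) :
    ∑ x ∈ B, |r x - 𝔼 y ∈ B, r y| ≤ 2 * T := by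
  rcases B.eq_empty_or_nonempty with rfl | hB
  · simpa only [sum_empty] using mul_nonneg zero_le_two hT
  obtain ⟨x, hx, hmin⟩ := B.exists_min_image r hB
  refine (sum_abs_sub_expect_le hmin).trans ?_
  gcongr
  calc ∑ y ∈ B, (r y - r x) = ∑ y ∈ B with r x < r y, (r y - r x) :=
        (sum_filter_of_ne fun y hy hne =>
          (hmin y hy).lt_of_ne fun heq => hne (sub_eq_zero.2 heq.symm)).symm
    _ ≤ ∑ y ∈ B with r x < r y, r y := by
        gcongr
        exact sub_le_self _ (hr x hx)
    _ ≤ T := htail x hx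

lemma exists_Icc_of_ne_expect {B : Finset ι} (hB : ∃ x ∈ B, r x ≠ 𝔼 y ∈ B, r y) :
    ∃ a b, a < 𝔼 y ∈ B, r y ∧ 𝔼 y ∈ B, r y < b ∧ (∃ x ∈ B, r x = a) ∧ (∃ x ∈ B, r x = b) ∧
      ∀ x ∈ B, r x ∈ Set.Icc a b := by
  obtain ⟨x₀, hx₀, hne⟩ := hB
  obtain ⟨x, hx, hmin⟩ := B.exists_min_image r ⟨x₀, hx₀⟩
  obtain ⟨y, hy, hmax⟩ := B.exists_max_image r ⟨x₀, hx₀⟩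
  obtain ⟨z, hz, hzpos⟩ := exists_pos_of_sum_zero_of_exists_nonzero _ (sum_sub_expect B r)
    ⟨x₀, hx₀, sub_ne_zero.2 hne⟩
  obtain ⟨w, hw, hwpos⟩ := exists_pos_of_sum_zero_of_exists_nonzero
    (fun x => -(r x - 𝔼 y ∈ B, r y)) (by rw [sum_neg_distrib, sum_sub_expect, neg_zero])
    ⟨x₀, hx₀, neg_ne_zero.2 (sub_ne_zero.2 hne)⟩
  exact ⟨r x, r y, (hmin w hw).trans_lt (sub_neg.1 (neg_pos.1 hwpos)),
    (sub_pos.1 hzpos).trans_le (hmax z hz), ⟨x, hx, rfl⟩, ⟨y, hy, rfl⟩,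
    fun t ht => ⟨hmin t ht, hmax t ht⟩⟩

-- The affine part of `h` on a bucket contributes nothing, because the bucket sums of `r` agree.
lemma abs_sum_sub_le_of_affine_approx {B : Finset ι} {m s v D : ℝ} (hv : 0 ≤ v)
    (hmean : ∑ x ∈ B, (r x - m) = 0)
    (happrox : ∀ x ∈ B, |h (r x) - h m - s * (r x - m)| ≤ v * |r x - m|)
    (hD : ∑ x ∈ B, |r x - m| ≤ D) :
    |∑ x ∈ B, (h (r x) - h m)| ≤ v * D :=
  calc |∑ x ∈ B, (h (r x) - h m)| = |∑ x ∈ B, (h (r x) - h m - s * (r x - m))| := by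
        rw [sum_sub_distrib (g := fun x => s * (r x - m)), ← mul_sum, hmean, mul_zero, sub_zero]
    _ ≤ ∑ x ∈ B, |h (r x) - h m - s * (r x - m)| := abs_sum_le_sum_abs _ _
    _ ≤ v * ∑ x ∈ B, |r x - m| := by
        rw [mul_sum]
        exact sum_le_sum happrox
    _ ≤ v * D := by gcongr

lemma abs_sum_sub_bucket_expect_le {q : ι → ℕ} {D : ℝ} (hL : LipschitzWith L h)
    (hn : IsPiecewiseConvex n h) (hq : ∀ x ∈ I, ∀ y ∈ I, q x < q y → r x ≤ r y)
    (hD : ∀ c, ∑ x ∈ I with q x = c, |r x - 𝔼 y ∈ I with q y = c, r y| ≤ D) :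
    |∑ x ∈ I, (h (r x) - h (𝔼 y ∈ I with q y = q x, r y))| ≤ n * (3 * L) * D := by
  have hD0 : 0 ≤ D := (sum_nonneg fun _ _ => abs_nonneg _).trans (hD 0)
  let m (c : ℕ) : ℝ := 𝔼 y ∈ I with q y = c, r y
  let Q : Finset ℕ := {c ∈ I.image q | ∃ x ∈ {x ∈ I | q x = c}, r x ≠ m c}
  have hspread (c : ℕ) (hc : c ∈ Q) := exists_Icc_of_ne_expect (mem_filter.1 hc).2
  choose! a b ham hmb ha hb hab using hspread
  have hba : ∀ c ∈ Q, ∀ c' ∈ Q, c < c' → b c ≤ a c' := by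
    intro c hc c' hc' hcc'
    obtain ⟨x, hx, hxb⟩ := hb c hc
    obtain ⟨y, hy, hya⟩ := ha c' hc'
    obtain ⟨hxI, rfl⟩ := mem_filter.1 hx
    obtain ⟨hyI, rfl⟩ := mem_filter.1 hy
    exact hxb ▸ hya ▸ hq x hxI y hyI hcc'
  obtain ⟨s, v, hv, hvsum, happrox⟩ :=
    exists_affine_approx_of_isPiecewiseConvex hL hn ham hmb hba
  have hbucket : ∀ c ∈ Q, |∑ x ∈ I with q x = c, (h (r x) - h (m c))| ≤ v c * D := fun c hc =>
    abs_sum_sub_le_of_affine_approx (hv c hc) (sum_sub_expect _ _)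
      (fun x hx => happrox c hc (r x) (hab c hc x hx)) (hD c)
  have hconstant : ∀ c ∈ I.image q, c ∉ Q → ∑ x ∈ I with q x = c, (h (r x) - h (m c)) = 0 :=
    fun c hc hcQ => sum_eq_zero fun x hx => by
      rw [not_not.1 fun hne => hcQ (mem_filter.2 ⟨hc, x, hx, hne⟩), sub_self]
  have hfiber : ∑ x ∈ I, (h (r x) - h (m (q x))) =
      ∑ c ∈ I.image q, ∑ x ∈ I with q x = c, (h (r x) - h (m c)) := by
    rw [← sum_fiberwise_of_maps_to fun x hx => mem_image_of_mem q hx]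
    exact sum_congr rfl fun c _ => sum_congr rfl fun x hx => by rw [(mem_filter.1 hx).2]
  calc |∑ x ∈ I, (h (r x) - h (m (q x)))|
      = |∑ c ∈ Q, ∑ x ∈ I with q x = c, (h (r x) - h (m c))| := by
        rw [hfiber, sum_subset (filter_subset _ _) hconstant]
    _ ≤ ∑ c ∈ Q, |∑ x ∈ I with q x = c, (h (r x) - h (m c))| := abs_sum_le_sum_abs _ _
    _ ≤ (∑ c ∈ Q, v c) * D := by
        rw [sum_mul]
        exact sum_le_sum hbucket
    _ ≤ n * (3 * L) * D := by gcongr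

lemma sub_le_of_natFloor_div_eq {x y : ℝ} (hT : 0 < T) (hx : 0 ≤ x)
    (hxy : ⌊y / T⌋₊ = ⌊x / T⌋₊) : y - x ≤ T := by
  have hlt : y / T < x / T + 1 :=
    calc y / T < ⌊y / T⌋₊ + 1 := Nat.lt_floor_add_one _
      _ ≤ x / T + 1 := by
        rw [hxy]
        gcongr
        exact Nat.floor_le (div_nonneg hx hT.le)
  rw [← sub_lt_iff_lt_add', ← sub_div, div_lt_one hT] at hlt
  exact hlt.le

lemma exists_bucketing (hr : ∀ x ∈ I, 0 ≤ r x) (hT : 0 ≤ T) (hT0 : T = 0 → ∑ x ∈ I, r x = 0) :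
    ∃ q : ι → ℕ, (∀ x, (q x : ℝ) ≤ (∑ y ∈ I, r y) / T) ∧ (∀ x y, q x < q y → r x ≤ r y) ∧
      ∀ x, ∑ y ∈ I with q y = q x ∧ r x < r y, r y ≤ T := by
  let partialSum (x : ι) : ℝ := ∑ y ∈ I with r y ≤ r x, r y
  have hpartial_nonneg (x : ι) : 0 ≤ partialSum x := sum_nonneg fun y hy => hr y (mem_filter.1 hy).1
  have hpartial_mono {x y : ι} (hxy : r x ≤ r y) : partialSum x ≤ partialSum y :=
    sum_le_sum_of_subset_of_nonneg (monotone_filter_right _ fun z _ hz => hz.trans hxy)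
      fun z hz _ => hr z (mem_filter.1 hz).1
  refine ⟨fun x => ⌊partialSum x / T⌋₊, fun x => ?_, fun x y hxy => ?_, fun x => ?_⟩
  · refine (Nat.floor_le (div_nonneg (hpartial_nonneg x) hT)).trans ?_
    gcongr
    exact sum_le_sum_of_subset_of_nonneg (filter_subset _ _) fun z hz _ => hr z hz
  · contrapose! hxy
    exact Nat.floor_mono (div_le_div_of_nonneg_right (hpartial_mono hxy.le) hT)
  · rcases hT.eq_or_lt with rfl | hTpos
    · rw [← hT0 rfl]
      exact sum_le_sum_of_subset_of_nonneg (filter_subset _ _) fun y hy _ => hr y hy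
    · let F : Finset ι := {y ∈ I | ⌊partialSum y / T⌋₊ = ⌊partialSum x / T⌋₊ ∧ r x < r y}
      change ∑ y ∈ F, r y ≤ T
      rcases F.eq_empty_or_nonempty with hF | hF
      · simpa only [hF, sum_empty] using hT
      obtain ⟨y, hy, hmax⟩ := F.exists_max_image r hF
      obtain ⟨-, hfloor, hxy⟩ := mem_filter.1 hy
      have hdisj : Disjoint F {z ∈ I | r z ≤ r x} := disjoint_filter.2 fun z _ hz => hz.2.not_ge
      have hsub : F ∪ {z ∈ I | r z ≤ r x} ⊆ {z ∈ I | r z ≤ r y} :=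
        union_subset (fun z hz => mem_filter.2 ⟨(mem_filter.1 hz).1, hmax z hz⟩)
          (monotone_filter_right _ fun z _ hz => hz.trans hxy.le)
      calc ∑ z ∈ F, r z ≤ partialSum y - partialSum x := by
            rw [le_sub_iff_add_le, ← sum_union hdisj]
            exact sum_le_sum_of_subset_of_nonneg hsub fun z hz _ => hr z (mem_filter.1 hz).1
        _ ≤ T := sub_le_of_natFloor_div_eq hTpos (hpartial_nonneg x) hfloor

lemma exists_quantization (hr : ∀ x ∈ I, 0 ≤ r x) (hT : 0 ≤ T)
    (hT0 : T = 0 → ∑ x ∈ I, r x = 0) :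
    ∃ r' : ι → ℝ, (#(I.image r') : ℝ) ≤ (∑ x ∈ I, r x) / T + 1 ∧
      ∀ (n : ℕ) (L : ℝ≥0) (h : ℝ → ℝ), LipschitzWith L h → IsPiecewiseConvex n h →
        |∑ x ∈ I, (h (r x) - h (r' x))| ≤ n * (3 * L) * (2 * T) := by
  obtain ⟨q, hcard, hmono, htail⟩ := exists_bucketing hr hT hT0
  let m (c : ℕ) : ℝ := 𝔼 y ∈ I with q y = c, r y
  refine ⟨fun x => m (q x), ?_, fun n L h hL hn =>
    abs_sum_sub_bucket_expect_le hL hn (fun x _ y _ => hmono x y) fun c =>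
      sum_abs_sub_expect_le_of_sum_lt_le hT (fun x hx => hr x (mem_filter.1 hx).1) fun x hx => ?_⟩
  · have hlabels : I.image q ⊆ range (⌊(∑ x ∈ I, r x) / T⌋₊ + 1) := image_subset_iff.2 fun x _ =>
      mem_range_succ_iff.2 (Nat.le_floor (hcard x))
    calc (#(I.image fun x => m (q x)) : ℝ) ≤ #(I.image q) := by
          rw [← Function.comp_def m q, ← image_image]
          exact_mod_cast card_image_le
      _ ≤ #(range (⌊(∑ x ∈ I, r x) / T⌋₊ + 1)) := by gcongr
      _ = ⌊(∑ x ∈ I, r x) / T⌋₊ + 1 := by rw [card_range, Nat.cast_add_one]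
      _ ≤ (∑ x ∈ I, r x) / T + 1 := by
          gcongr
          exact Nat.floor_le (div_nonneg (sum_nonneg hr) hT)
  · obtain ⟨-, rfl⟩ := mem_filter.1 hx
    simpa only [filter_filter] using htail x

end Quantize

section Ray

variable {ι E : Type*} [NormedAddCommGroup E] [InnerProductSpace ℝ E]

lemma convex_setOf_dist_le_dist (a b : E) : Convex ℝ {x | dist x a ≤ dist x b} := by
  have hiff (x : E) : dist x a ≤ dist x b ↔ inner ℝ (b - a) x ≤ (‖b‖ ^ 2 - ‖a‖ ^ 2) / 2 := by
    rw [dist_eq_norm, dist_eq_norm, ← sq_le_sq₀ (norm_nonneg _) (norm_nonneg _),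
      norm_sub_sq_real, norm_sub_sq_real, inner_sub_left, real_inner_comm x a, real_inner_comm x b]
    constructor <;> intro h <;> linarith
  simp only [hiff]
  exact convex_halfSpace_le (innerₛₗ ℝ (b - a)).isLinear _

-- On the cell of the line where `c` is the nearest center, the distance to `C` is the convex
-- function `dist · c`.
lemma isPiecewiseConvex_max_infDist_sub (g : ℝ →ᵃ[ℝ] E) {C : Finset E} (hC : C.Nonempty) (t : ℝ) :
    IsPiecewiseConvex #C fun s => max (infDist (g s) C - t) 0 := by
  let cell (c : E) : Set ℝ := {s | infDist (g s) C = dist (g s) c}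
  have hcell : ∀ c ∈ C, cell c = g ⁻¹' ⋂ c' ∈ C, {x | dist x c ≤ dist x c'} := by
    refine fun c hc => Set.ext fun s => ?_
    simp only [cell, Set.mem_ofPred_eq, Set.mem_preimage, Set.mem_iInter₂]
    refine ⟨fun hs c' hc' => hs ▸ infDist_le_dist_of_mem hc', fun hs => ?_⟩
    exact le_antisymm (infDist_le_dist_of_mem hc) ((le_infDist hC).2 @hs)
  refine ⟨C.image cell, card_image_le, ?_, ?_⟩
  · refine Set.eq_univ_of_forall fun s => ?_
    obtain ⟨c, hc, hdist⟩ := C.finite_toSet.isCompact.exists_infDist_eq_dist hC (g s)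
    exact ⟨cell c, mem_coe.2 (mem_image_of_mem _ hc), hdist⟩
  · simp only [forall_mem_image]
    intro c hc
    have hconvex : Convex ℝ (cell c) := by
      rw [hcell c hc]
      exact (convex_iInter₂ fun c' _ => convex_setOf_dist_le_dist c c').affine_preimage g
    have hdist : ConvexOn ℝ (cell c) fun s => max (dist (g s) c - t) 0 :=
      ((((convexOn_dist c convex_univ).comp_affineMap g).subset (Set.subset_univ _) hconvex).sub
        (concaveOn_const t hconvex)).sup (convexOn_const 0 hconvex)
    exact hdist.congr fun s hs => by rw [hs]

lemma lipschitzWith_max_infDist_sub {α β : Type*} [PseudoMetricSpace α] [PseudoMetricSpace β]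
    {g : α → β} (hg : LipschitzWith 1 g) (C : Set β) (t : ℝ) :
    LipschitzWith 1 fun s => max (infDist (g s) C - t) 0 :=
  LipschitzWith.mk_one fun s s' =>
    calc |max (infDist (g s) C - t) 0 - max (infDist (g s') C - t) 0|
        ≤ |infDist (g s) C - t - (infDist (g s') C - t)| := abs_max_sub_max_le_abs _ _ _
      _ = dist (infDist (g s) C) (infDist (g s') C) := by
        rw [sub_sub_sub_cancel_right, Real.dist_eq]
      _ ≤ dist (g s) (g s') := (lipschitz_infDist_pt C).dist_le_mul _ _ |>.trans_eq (one_mul _)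
      _ ≤ dist s s' := (hg.dist_le_mul s s').trans_eq (one_mul _)

lemma exists_ray_quantization {O : Finset ι} {g : ι → ℝ →ᵃ[ℝ] E} {P : Finset (ℝ →ᵃ[ℝ] E)}
    {r : ι → ℝ} {T : ℝ} (hgP : ∀ x ∈ O, g x ∈ P) (hP : ∀ γ ∈ P, LipschitzWith 1 γ)
    (hr : ∀ x ∈ O, 0 ≤ r x) (hT : 0 ≤ T) (hT0 : T = 0 → ∑ x ∈ O, r x = 0) :
    ∃ r' : ι → ℝ, (#(O.image fun x => g x (r' x)) : ℝ) ≤ (∑ x ∈ O, r x) / T + #P ∧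
      ∀ C : Finset E, C.Nonempty → ∀ t : ℝ,
        |∑ x ∈ O, (max (infDist (g x (r x)) C - t) 0 - max (infDist (g x (r' x)) C - t) 0)| ≤
          #P * (6 * #C * T) := by
  have hO_nonneg (γ : ℝ →ᵃ[ℝ] E) : ∀ x ∈ O.filter (g · = γ), 0 ≤ r x :=
    fun x hx => hr x (mem_filter.1 hx).1
  have hquant (γ : ℝ →ᵃ[ℝ] E) := exists_quantization (hO_nonneg γ) hT fun hT' =>
    sum_eq_zero fun x hx => (sum_eq_zero_iff_of_nonneg hr).1 (hT0 hT') x (mem_filter.1 hx).1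
  choose ρ hcard herr using hquant
  refine ⟨fun x => ρ (g x) x, ?_, fun C hC t => ?_⟩
  · have hsub : (O.image fun x => g x (ρ (g x) x)) ⊆
        P.biUnion fun γ => ((O.filter (g · = γ)).image (ρ γ)).image γ :=
      image_subset_iff.2 fun x hx => mem_biUnion.2 ⟨g x, hgP x hx,
        mem_image_of_mem _ (mem_image_of_mem _ (mem_filter.2 ⟨hx, rfl⟩))⟩
    calc (#(O.image fun x => g x (ρ (g x) x)) : ℝ)
        ≤ ∑ γ ∈ P, (#(((O.filter (g · = γ)).image (ρ γ)).image γ) : ℝ) := by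
          exact_mod_cast (card_le_card hsub).trans card_biUnion_le
      _ ≤ ∑ γ ∈ P, ((∑ x ∈ O with g x = γ, r x) / T + 1) := by
          gcongr with γ
          exact (Nat.cast_le.2 card_image_le).trans (hcard γ)
      _ = (∑ x ∈ O, r x) / T + #P := by
          rw [sum_add_distrib, ← sum_div, sum_fiberwise_of_maps_to hgP, sum_const, nsmul_one]
  · let φ (y : E) : ℝ := max (infDist y C - t) 0
    have hbucket : ∀ γ ∈ P, |∑ x ∈ O with g x = γ, (φ (g x (r x)) - φ (g x (ρ (g x) x)))| ≤
        6 * #C * T := fun γ hγ => by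
      rw [sum_congr rfl fun x hx => show _ = φ (γ (r x)) - φ (γ (ρ γ x)) by
        rw [(mem_filter.1 hx).2]]
      refine (herr γ #C 1 (fun s => φ (γ s)) (lipschitzWith_max_infDist_sub (hP γ hγ) C t)
        (isPiecewiseConvex_max_infDist_sub γ hC t)).trans_eq ?_
      push_cast
      ring
    calc |∑ x ∈ O, (φ (g x (r x)) - φ (g x (ρ (g x) x)))|
        = |∑ γ ∈ P, ∑ x ∈ O with g x = γ, (φ (g x (r x)) - φ (g x (ρ (g x) x)))| := by
          rw [sum_fiberwise_of_maps_to hgP]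
      _ ≤ ∑ γ ∈ P, |∑ x ∈ O with g x = γ, (φ (g x (r x)) - φ (g x (ρ (g x) x)))| :=
          abs_sum_le_sum_abs _ _
      _ ≤ #P * (6 * #C * T) := by
          rw [← nsmul_eq_mul]
          exact sum_le_card_nsmul _ _ _ hbucket

end Ray

section Net

variable {E : Type*} [NormedAddCommGroup E] [NormedSpace ℝ E] [FiniteDimensional ℝ E] {ε : ℝ≥0}

-- The balls of radius `ε / 2` around the points of `s` are disjoint and lie in the ball of
-- radius `R + ε / 2`.
lemma card_le_of_isSeparated_closedBall {s : Finset E} {x : E} {R : ℝ} (hε : 0 < ε) (hR : 0 ≤ R)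
    (hs : (s : Set E) ⊆ closedBall x R) (hsep : IsSeparated ε (s : Set E)) :
    (#s : ℝ) ≤ (1 + 2 * R / ε) ^ finrank ℝ E := by
  borelize E
  let μ : MeasureTheory.Measure E := MeasureTheory.Measure.addHaar
  have hε' : (0 : ℝ) < ε := hε
  have hdisj : Set.PairwiseDisjoint (s : Set E) fun c => closedBall c ((ε : ℝ) / 2) :=
    fun c hc c' hc' hne => closedBall_disjoint_closedBall <| by
      have hlt : (ε : ENNReal) < edist c c' := hsep hc hc' hne
      rw [edist_nndist, ENNReal.coe_lt_coe, ← NNReal.coe_lt_coe, coe_nndist] at hlt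
      rwa [add_halves]
  have hsub : ⋃ c ∈ s, closedBall c ((ε : ℝ) / 2) ⊆ closedBall x (R + ε / 2) :=
    Set.iUnion₂_subset fun c hc => closedBall_subset_closedBall' <| by
      linarith [mem_closedBall.1 (hs hc)]
  have hvolume : #s * ((ε : ℝ) / 2) ^ finrank ℝ E * μ.real (ball 0 1) ≤
      (R + ε / 2) ^ finrank ℝ E * μ.real (ball 0 1) :=
    calc #s * ((ε : ℝ) / 2) ^ finrank ℝ E * μ.real (ball 0 1)
        = ∑ c ∈ s, μ.real (closedBall c ((ε : ℝ) / 2)) := by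
          rw [sum_congr rfl fun c _ => μ.addHaar_real_closedBall c (half_pos hε').le, sum_const,
            nsmul_eq_mul, mul_assoc]
      _ = μ.real (⋃ c ∈ s, closedBall c ((ε : ℝ) / 2)) :=
          (MeasureTheory.measureReal_biUnion_finset hdisj (fun _ _ => measurableSet_closedBall)
            fun _ _ => MeasureTheory.measure_closedBall_lt_top.ne).symm
      _ ≤ μ.real (closedBall x (R + ε / 2)) :=
          MeasureTheory.measureReal_mono hsub MeasureTheory.measure_closedBall_lt_top.ne
      _ = (R + ε / 2) ^ finrank ℝ E * μ.real (ball 0 1) :=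
          μ.addHaar_real_closedBall x (by positivity)
  have hball : 0 < μ.real (ball 0 1) :=
    ENNReal.toReal_pos (measure_ball_pos μ 0 one_pos).ne' MeasureTheory.measure_ball_lt_top.ne
  have hpow := le_of_mul_le_mul_right hvolume hball
  rw [← le_div_iff₀ (by positivity), ← div_pow] at hpow
  exact hpow.trans_eq (by field_simp; ring)

lemma exists_finset_isCover_closedBall (hε : 0 < ε) (x : E) {R : ℝ} (hR : 0 ≤ R) :
    ∃ N : Finset E, (N : Set E) ⊆ closedBall x R ∧ IsCover ε (closedBall x R) (N : Set E) ∧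
      (#N : ℝ) ≤ (1 + 2 * R / ε) ^ finrank ℝ E := by
  have hpacking : packingNumber ε (closedBall x R) ≠ ⊤ := by
    obtain ⟨N, -, hfinite, hN⟩ :=
      exists_finite_isCover_of_isCompact (half_pos hε).ne' (isCompact_closedBall x R)
    have hle := packingNumber_two_mul_le_externalCoveringNumber (ε / 2) (closedBall x R)
    rw [mul_div_cancel₀ ε two_ne_zero] at hle
    exact ne_top_of_le_ne_top hfinite.encard_lt_top.ne
      (hle.trans hN.externalCoveringNumber_le_encard)
  have hfinite : (maximalSeparatedSet ε (closedBall x R)).Finite :=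
    Set.encard_ne_top_iff.1 (encard_maximalSeparatedSet hpacking ▸ hpacking)
  refine ⟨hfinite.toFinset, ?_, ?_, ?_⟩
  · rw [hfinite.coe_toFinset]
    exact maximalSeparatedSet_subset
  · rw [hfinite.coe_toFinset]
    exact isCover_maximalSeparatedSet hpacking
  · refine card_le_of_isSeparated_closedBall (x := x) hε hR ?_ ?_ <;> rw [hfinite.coe_toFinset]
    exacts [maximalSeparatedSet_subset, isSeparated_maximalSeparatedSet]

lemma exists_direction_net (E : Type*) [NormedAddCommGroup E] [NormedSpace ℝ E]
    [FiniteDimensional ℝ E] {ε : ℝ} (hε : 0 < ε) (hε1 : ε ≤ 1) :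
    ∃ N : Finset E, (#N : ℝ) ≤ (3 / ε) ^ finrank ℝ E ∧ (∀ u ∈ N, ‖u‖ ≤ 1) ∧
      ∀ w : E, ∀ s : ℝ, ‖w‖ ≤ s → ∃ u ∈ N, ‖w - s • u‖ ≤ ε * s := by
  lift ε to ℝ≥0 using hε.le
  obtain ⟨N, hsub, hcover, hcard⟩ :=
    exists_finset_isCover_closedBall (NNReal.coe_pos.1 hε) (0 : E) zero_le_one
  rw [isCover_iff_subset_iUnion_closedBall] at hcover
  have hnear (w : E) (hw : ‖w‖ ≤ 1) : ∃ u ∈ N, ‖w - u‖ ≤ ε := by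
    simpa only [Set.mem_iUnion₂, mem_closedBall, dist_eq_norm, exists_prop, mem_coe] using
      hcover (mem_closedBall_zero_iff.2 hw)
  refine ⟨N, hcard.trans ?_, fun u hu => mem_closedBall_zero_iff.1 (hsub hu), fun w s hws => ?_⟩
  · have hone : 1 ≤ 1 / (ε : ℝ) := (one_le_div hε).2 hε1
    gcongr
    rw [mul_one, show (3 : ℝ) = 1 + 2 by norm_num, add_div]
    gcongr
  · have hs : 0 ≤ s := (norm_nonneg w).trans hws
    obtain ⟨u, hu, hwu⟩ := hnear (s⁻¹ • w) <| by
      rw [norm_smul, norm_inv, Real.norm_of_nonneg hs, inv_mul_eq_div]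
      exact div_le_one_of_le₀ hws hs
    have hw : w = s • s⁻¹ • w := by
      rcases hs.eq_or_lt with rfl | hpos
      · rw [zero_smul, norm_le_zero_iff.1 hws]
      · rw [smul_inv_smul₀ hpos.ne']
    refine ⟨u, hu, ?_⟩
    calc ‖w - s • u‖ = ‖s • (s⁻¹ • w - u)‖ := by rw [smul_sub, ← hw]
      _ = s * ‖s⁻¹ • w - u‖ := by rw [norm_smul, Real.norm_of_nonneg hs]
      _ ≤ ε * s := by rw [mul_comm]; gcongr

lemma exists_line_net {C : Finset E} (hC : C.Nonempty) {ε : ℝ} (hε : 0 < ε) (hε1 : ε ≤ 1) :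
    ∃ P : Finset (ℝ →ᵃ[ℝ] E), (#P : ℝ) ≤ #C * (3 / ε) ^ finrank ℝ E ∧
      (∀ γ ∈ P, LipschitzWith 1 γ) ∧
        ∀ x : E, ∀ s : ℝ, infDist x C ≤ s → ∃ γ ∈ P, dist x (γ s) ≤ ε * s := by
  obtain ⟨N, hcard, hN, hnet⟩ := exists_direction_net E hε hε1
  refine ⟨(C ×ˢ N).image fun q => AffineMap.lineMap q.1 (q.1 + q.2), ?_, ?_, fun x s hxs => ?_⟩
  · calc (#((C ×ˢ N).image fun q => AffineMap.lineMap q.1 (q.1 + q.2)) : ℝ) ≤ #C * #N := by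
          exact_mod_cast card_image_le.trans_eq (card_product C N)
      _ ≤ #C * (3 / ε) ^ finrank ℝ E := by gcongr
  · simp only [forall_mem_image, mem_product]
    rintro ⟨c, u⟩ ⟨-, hu⟩
    refine (lipschitzWith_lineMap c (c + u)).weaken ?_
    rw [← NNReal.coe_le_coe, coe_nndist, dist_self_add_right]
    exact hN u hu
  · obtain ⟨c, hc, hdist⟩ := C.finite_toSet.isCompact.exists_infDist_eq_dist hC x
    obtain ⟨u, hu, hxu⟩ := hnet (x - c) s (by rwa [← dist_eq_norm, ← hdist])
    refine ⟨_, mem_image_of_mem _ (mk_mem_product hc hu), ?_⟩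
    rwa [AffineMap.lineMap_apply, vsub_eq_sub, add_sub_cancel_left, vadd_eq_add, dist_eq_norm,
      sub_add_eq_sub_sub_swap]

end Net

section Piecewise

variable {ι : Type*} {X O S : Finset ι}

lemma sum_piecewise_const_le {r : ι → ℝ} {s : ℝ} (hr : ∀ x ∈ O, 0 ≤ r x)
    (hs : 0 ≤ s) : ∑ x ∈ S, O.piecewise r (fun _ => s) x ≤ ∑ x ∈ O, r x + #S * s := by
  rw [sum_piecewise, sum_const, nsmul_eq_mul]
  gcongr
  exacts [fun x hx _ => hr x hx, inter_subset_right, sdiff_subset]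

lemma abs_topP_piecewise_sub_le {f : ι → ℝ → ℝ} {r r' s : ι → ℝ} {p : ℕ} {e : ℝ}
    (hp : 0 < p) (hpX : p ≤ #X) (hOX : O ⊆ X)
    (h : ∀ t, |∑ x ∈ O, (max (f x (r x) - t) 0 - max (f x (r' x) - t) 0)| ≤ e) :
    |topP p (X.val.map fun x => f x (O.piecewise r s x)) -
      topP p (X.val.map fun x => f x (O.piecewise r' s x))| ≤ e := by
  refine abs_topP_sub_topP_le_of_abs_sum_max_sub_le hp hpX fun t => ?_
  rw [← sum_subset hOX fun x _ hxO => by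
    rw [piecewise_eq_of_notMem _ _ _ hxO, piecewise_eq_of_notMem _ _ _ hxO, sub_self]]
  refine (congrArg abs (sum_congr rfl fun x hx => ?_)).trans_le (h t)
  rw [piecewise_eq_of_mem _ _ _ hx, piecewise_eq_of_mem _ _ _ hx]

lemma card_image_piecewise_const_le {Γ M : Type*} [FunLike Γ ℝ M] {P : Finset Γ} {X O : Finset ι}
    {g : ι → Γ} (hg : ∀ x ∈ X, g x ∈ P) (r : ι → ℝ) (s : ℝ) :
    #(X.image fun x => g x (O.piecewise r (fun _ => s) x)) ≤
      #(O.image fun x => g x (r x)) + #P := by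
  have hsub : (X.image fun x => g x (O.piecewise r (fun _ => s) x)) ⊆
      (O.image fun x => g x (r x)) ∪ P.image (· s) := by
    refine image_subset_iff.2 fun x hx => mem_union.2 ?_
    by_cases hxO : x ∈ O
    · exact .inl (mem_image.2 ⟨x, hxO, by rw [piecewise_eq_of_mem _ _ _ hxO]⟩)
    · exact .inr (mem_image.2 ⟨g x, hg x hx, by rw [piecewise_eq_of_notMem _ _ _ hxO]⟩)
  calc #(X.image fun x => g x (O.piecewise r (fun _ => s) x))
      ≤ #(O.image fun x => g x (r x)) + #(P.image (· s)) :=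
        (card_le_card hsub).trans (card_union_le _ _)
    _ ≤ #(O.image fun x => g x (r x)) + #P := by gcongr; exact card_image_le

end Piecewise

section Cost

variable {M : Type*} [PseudoMetricSpace M] {k p : ℕ}

/-- The `p`-Centrum objective of the multiset `s` of points of a metric space for the centers `C`:
the sum of the `p` largest distances from the points of `s` to `C`. It is `costP` beyond the
Euclidean spaces `EuclideanSpace ℝ (Fin d)`. -/
noncomputable def pCentrumCost (p : ℕ) (s : Multiset M) (C : Finset M) : ℝ :=
  topP p (s.map fun x => infDist x C)

lemma exists_subset_infDist_le_two_mul {X C : Finset M} (hX : X.Nonempty) (hC : C.Nonempty) :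
    ∃ C' ⊆ X, C'.Nonempty ∧ #C' ≤ #C ∧ ∀ x ∈ X, infDist x C' ≤ 2 * infDist x C := by
  choose near hnearX hnear using fun c : M => X.exists_min_image (dist · c) hX
  refine ⟨C.image near, image_subset_iff.2 fun c _ => hnearX c, hC.image _, card_image_le,
    fun x hx => ?_⟩
  obtain ⟨c, hc, hdist⟩ := C.finite_toSet.isCompact.exists_infDist_eq_dist hC x
  calc infDist x (C.image near) ≤ dist x (near c) :=
        infDist_le_dist_of_mem (mem_coe.2 (mem_image_of_mem _ hc))
    _ ≤ dist x c + dist (near c) c := dist_triangle_right _ _ _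
    _ ≤ dist x c + dist x c := by gcongr; exact hnear c x hx
    _ = 2 * infDist x C := by rw [hdist, two_mul]

lemma exists_centers_pCentrumCost_le_two_mul {X : Finset M} (hk : 0 < k) (hp : 0 < p)
    (hpX : p ≤ #X) :
    ∃ A : Finset M, A.Nonempty ∧ #A ≤ k ∧ ∀ C : Finset M, C.Nonempty → #C ≤ k →
      pCentrumCost p X.val A ≤ 2 * pCentrumCost p X.val C := by
  have hX : X.Nonempty := card_pos.1 (hp.trans_le hpX)
  let candidates : Finset (Finset M) := {A ∈ X.powerset | A.Nonempty ∧ #A ≤ k}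
  have hcandidates : candidates.Nonempty := by
    obtain ⟨x, hx⟩ := hX
    exact ⟨{x}, mem_filter.2 ⟨mem_powerset.2 (singleton_subset_iff.2 hx), singleton_nonempty x,
      (card_singleton x).trans_le hk⟩⟩
  obtain ⟨A, hA, hmin⟩ := candidates.exists_min_image (pCentrumCost p X.val) hcandidates
  obtain ⟨-, hA_nonempty, hA_card⟩ := mem_filter.1 hA
  refine ⟨A, hA_nonempty, hA_card, fun C hC hCk => ?_⟩
  obtain ⟨C', hC'X, hC'_nonempty, hC'C, hdist⟩ := exists_subset_infDist_le_two_mul hX hC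
  calc pCentrumCost p X.val A ≤ pCentrumCost p X.val C' :=
        hmin C' (mem_filter.2 ⟨mem_powerset.2 hC'X, hC'_nonempty, hC'C.trans hCk⟩)
    _ ≤ 2 * pCentrumCost p X.val C := topP_le_mul_topP hp hpX zero_le_two hdist

lemma exists_curve_snapping {Γ : Type*} [FunLike Γ ℝ M] {P : Finset Γ} {X : Finset M} {r : M → ℝ}
    {ε : ℝ} (hp : 0 < p) (hpX : p ≤ #X) (hε : 0 ≤ ε) (hr : ∀ x, 0 ≤ r x)
    (hP : ∀ x s, r x ≤ s → ∃ γ ∈ P, dist x (γ s) ≤ ε * s) :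
    ∃ O ⊆ X, ∑ x ∈ O, r x = topP p (X.val.map r) ∧ ∃ (s : ℝ) (g : M → Γ), (∀ x, g x ∈ P) ∧
      ∀ C : Set M, |topP p (X.val.map fun x => infDist x C) -
        topP p (X.val.map fun x => infDist (g x (O.piecewise r (fun _ => s) x)) C)| ≤
          2 * ε * topP p (X.val.map r) := by
  obtain ⟨O, hOX, hOp, hdom, htop⟩ := exists_topP_eq_sum_s12 r hpX
  set R := topP p (X.val.map r)
  have hp' : (0 : ℝ) < p := Nat.cast_pos.2 hp
  have hs : 0 ≤ R / p := div_nonneg (htop ▸ sum_nonneg fun x _ => hr x) hp'.le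
  let ρ := O.piecewise r fun _ => R / p
  have hrρ : ∀ x ∈ X, r x ≤ ρ x := fun x hx => by
    by_cases hxO : x ∈ O
    · exact (piecewise_eq_of_mem _ _ _ hxO).ge
    · rw [show ρ x = R / p from piecewise_eq_of_notMem _ _ _ hxO, le_div_iff₀' hp', htop,
        ← nsmul_eq_mul, ← hOp]
      exact card_nsmul_le_sum _ _ _ fun y hy => hdom y hy x (mem_sdiff.2 ⟨hx, hxO⟩)
  choose g hgP hg using fun x => hP x (max (r x) (ρ x)) (le_max_left _ _)
  have hdist : ∀ x ∈ X, dist x (g x (ρ x)) ≤ ε * ρ x := fun x hx => by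
    simpa only [max_eq_right (hrρ x hx)] using hg x
  refine ⟨O, hOX, htop.symm, R / p, g, hgP, fun C =>
    abs_topP_sub_topP_le_of_sum_abs_sub_le hp hpX fun S hSX hSp => ?_⟩
  calc ∑ x ∈ S, |infDist x C - infDist (g x (ρ x)) C| ≤ ∑ x ∈ S, ε * ρ x :=
        sum_le_sum fun x hx => ((lipschitz_infDist_pt C).dist_le_mul _ _).trans
          ((one_mul _).trans_le (hdist x (hSX hx)))
    _ ≤ ε * (∑ x ∈ O, r x + #S * (R / p)) := by
        rw [← mul_sum]
        gcongr
        exact sum_piecewise_const_le (fun x _ => hr x) hs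
    _ = 2 * ε * R := by
        rw [hSp, ← htop, mul_div_cancel₀ R hp'.ne']
        ring

end Cost

section Coreset

variable {E : Type*} [NormedAddCommGroup E] [InnerProductSpace ℝ E] {k p : ℕ} {ε T : ℝ}
  {P : Finset (ℝ →ᵃ[ℝ] E)} {X : Finset E} {r : E → ℝ}

lemma exists_rounding_to_line_net (hp : 0 < p) (hpX : p ≤ #X) (hε : 0 ≤ ε) (hr : ∀ x, 0 ≤ r x)
    (hP : ∀ γ ∈ P, LipschitzWith 1 γ) (hnet : ∀ x s, r x ≤ s → ∃ γ ∈ P, dist x (γ s) ≤ ε * s)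
    (hT : 0 ≤ T) (hT0 : T = 0 → topP p (X.val.map r) = 0) :
    ∃ D : Multiset E, (#D.toFinset : ℝ) ≤ topP p (X.val.map r) / T + 2 * #P ∧
      ∀ C : Finset E, C.Nonempty → |pCentrumCost p X.val C - pCentrumCost p D C| ≤
        2 * ε * topP p (X.val.map r) + #P * (6 * #C * T) := by
  obtain ⟨O, hOX, hO, s, g, hgP, hsnap⟩ := exists_curve_snapping hp hpX hε hr hnet
  obtain ⟨r', hcard, hquant⟩ := exists_ray_quantization (fun x _ => hgP x) hP (fun x _ => hr x) hT
    (hO ▸ hT0)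
  refine ⟨X.val.map fun x => g x (O.piecewise r' (fun _ => s) x), ?_, fun C hC => ?_⟩
  · calc (#(X.image fun x => g x (O.piecewise r' (fun _ => s) x)) : ℝ)
        ≤ #(O.image fun x => g x (r' x)) + #P :=
          mod_cast card_image_piecewise_const_le (fun x _ => hgP x) r' s
      _ ≤ topP p (X.val.map r) / T + 2 * #P := by linarith [hO ▸ hcard]
  · rw [pCentrumCost, pCentrumCost, Multiset.map_map]
    exact (abs_sub_le _ _ _).trans (add_le_add (hsnap C) (abs_topP_piecewise_sub_le
      (f := fun x y => infDist (g x y) C) (s := fun _ => s) hp hpX hOX (hquant C hC)))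

lemma exists_coreset_of_line_net (hk : 0 < k) (hp : 0 < p) (hpX : p ≤ #X)
    (hε : ε ∈ Set.Ioc (0 : ℝ) 1) (hr : ∀ x, 0 ≤ r x) (hP : ∀ γ ∈ P, LipschitzWith 1 γ)
    (hnet : ∀ x s, r x ≤ s → ∃ γ ∈ P, dist x (γ s) ≤ ε * s) :
    ∃ D : Multiset E, (#D.toFinset : ℝ) ≤ 3 * k * #P / ε ∧
      ∀ C : Finset E, C.Nonempty → #C ≤ k →
        |pCentrumCost p X.val C - pCentrumCost p D C| ≤ 8 * ε * topP p (X.val.map r) := by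
  obtain ⟨hε0, hε1⟩ := hε
  have hR : 0 ≤ topP p (X.val.map r) := by
    obtain ⟨O, -, -, -, hO⟩ := exists_topP_eq_sum_s12 r hpX
    exact hO ▸ sum_nonneg fun x _ => hr x
  set R := topP p (X.val.map r)
  have hkP : (0 : ℝ) < k * #P := by
    obtain ⟨γ, hγ, -⟩ := hnet 0 _ le_rfl
    exact mod_cast Nat.mul_pos hk (card_pos.2 ⟨γ, hγ⟩)
  let T := ε * R / (k * #P)
  have hT0 : T = 0 → R = 0 := fun hT =>
    (mul_eq_zero_iff_left hε0.ne').1 ((div_eq_zero_iff.1 hT).resolve_right hkP.ne')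
  obtain ⟨D, hcard, hD⟩ :=
    exists_rounding_to_line_net hp hpX hε0.le hr hP hnet (by positivity : 0 ≤ T) hT0
  refine ⟨D, hcard.trans ?_, fun C hC hCk => (hD C hC).trans ?_⟩
  · have hRT : R / T ≤ k * #P / ε :=
      calc R / T = R / R * (k * #P / ε) := by simp only [T, div_div_eq_mul_div]; field_simp
        _ ≤ k * #P / ε := mul_le_of_le_one_left (by positivity) (div_self_le_one R)
    have hP_le : #P ≤ k * #P / ε :=
      calc (#P : ℝ) ≤ k * #P := mod_cast Nat.le_mul_of_pos_left _ hk
        _ ≤ k * #P / ε := le_div_self hkP.le hε0 hε1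
    calc R / T + 2 * #P ≤ k * #P / ε + 2 * (k * #P / ε) := by gcongr
      _ = 3 * k * #P / ε := by ring
  · calc 2 * ε * R + #P * (6 * #C * T) ≤ 2 * ε * R + #P * (6 * k * T) := by gcongr
      _ = 2 * ε * R + 6 * (T * (k * #P)) := by ring
      _ = 8 * ε * R := by rw [div_mul_cancel₀ _ hkP.ne']; ring

end Coreset

theorem stmt_12_general {E : Type*} [NormedAddCommGroup E] [InnerProductSpace ℝ E]
    [FiniteDimensional ℝ E] {k : ℕ} (hk : 0 < k) {ε : ℝ} (hε : ε ∈ Set.Ioo (0 : ℝ) 1)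
    {X : Finset E} {p : ℕ} (hp : 0 < p) (hpX : p ≤ #X) :
    ∃ D : Multiset E,
      (#D.toFinset : ℝ) ≤ 48 * 48 ^ finrank ℝ E * k ^ 2 / ε ^ (finrank ℝ E + 1) ∧
      ∀ C : Finset E, C.Nonempty → #C ≤ k →
        pCentrumCost p D C ∈
          Set.Icc ((1 - ε) * pCentrumCost p X.val C) ((1 + ε) * pCentrumCost p X.val C) := by
  obtain ⟨hε0, hε1⟩ := hε
  obtain ⟨A, hA, hAk, hA_cost⟩ := exists_centers_pCentrumCost_le_two_mul hk hp hpX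
  obtain ⟨P, hP_card, hP, hnet⟩ :=
    exists_line_net hA (by positivity : 0 < ε / 16) (by linarith)
  obtain ⟨D, hD_card, hD⟩ := exists_coreset_of_line_net hk hp hpX
    ⟨by positivity, by linarith⟩ (fun _ => infDist_nonneg) hP hnet
  refine ⟨D, ?_, fun C hC hCk => ?_⟩
  · calc (#D.toFinset : ℝ) ≤ 3 * k * #P / (ε / 16) := hD_card
      _ ≤ 3 * k * (k * (3 / (ε / 16)) ^ finrank ℝ E) / (ε / 16) := by
          gcongr
          exact hP_card.trans (by gcongr)
      _ = 48 * 48 ^ finrank ℝ E * k ^ 2 / ε ^ (finrank ℝ E + 1) := by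
          rw [show 3 / (ε / 16) = 48 / ε by ring, div_pow]
          ring
  · have herror : |pCentrumCost p X.val C - pCentrumCost p D C| ≤ ε * pCentrumCost p X.val C :=
      calc _ ≤ 8 * (ε / 16) * pCentrumCost p X.val A := hD C hC hCk
        _ ≤ 8 * (ε / 16) * (2 * pCentrumCost p X.val C) := by gcongr; exact hA_cost C hC hCk
        _ = ε * pCentrumCost p X.val C := by ring
    obtain ⟨hlower, hupper⟩ := abs_sub_le_iff.1 herror
    constructor <;> linarith

theorem stmt_12 (d : ℕ) (hd : 1 ≤ d) :
    ∃ K : ℝ, 0 < K ∧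
      ∀ k : ℕ, 1 ≤ k →
      ∀ ε : ℝ, ε ∈ Set.Ioo (0 : ℝ) 1 →
      ∀ X : Finset (EuclideanSpace ℝ (Fin d)),
      ∀ p : ℕ, 1 ≤ p → p ≤ X.card →
      ∃ D : Multiset (EuclideanSpace ℝ (Fin d)),
        (D.toFinset.card : ℝ) ≤ K * k ^ 2 / ε ^ (d + 1) ∧
        ∀ C : Finset (EuclideanSpace ℝ (Fin d)), C.card = k → C.Nonempty →
          costP d p D C ∈
            Set.Icc ((1 - ε) * costP d p X.val C) ((1 + ε) * costP d p X.val C) := by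
  refine ⟨48 * 48 ^ d, by positivity, fun k hk ε hε X p hp hpX => ?_⟩
  obtain ⟨D, hcard, hD⟩ := stmt_12_general hk hε hp hpX
  rw [finrank_euclideanSpace_fin] at hcard
  exact ⟨D, by convert hcard, fun C hCk hC => hD C hC hCk.le⟩
end
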